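/- Let P be a flag 3-polytope. If a simple 4-loop L_4 = (F_i, F_j, F_k, F_l) is not a 4-belt, then L_4 consists of the four facets surrounding an edge of P (two opposite facets of the loop meet along an edge whose endpoints lie on the two other facets), and L_4 borders a k-loop with k = s_i + s_j + s_k + s_l − 14 ≥ 2, where s_i, s_j, s_k, s_l are the numbers of edges of the four facets. -/

import Mathlib

open Set

noncomputable section

/-- The ambient space `ℝ³`. -/
abbrev E3 := EuclideanSpace ℝ (Fin 3)

/-- The cyclic successor in `Fin k`. -/
def nxt {k : ℕ} (i : Fin k) : Fin k := ⟨(i.1 + 1) % k, Nat.mod_lt _ i.pos⟩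

/-- The cyclic predecessor in `Fin k`. -/
def prv {k : ℕ} (i : Fin k) : Fin k := ⟨(i.1 + (k - 1)) % k, Nat.mod_lt _ i.pos⟩

/-- A convex polytope in `ℝ³`: the convex hull of a finite set of points. -/
def IsPolytope (P : Set E3) : Prop := ∃ V : Finset E3, P = convexHull ℝ (V : Set E3)

/-- The dimension of a subset of `ℝ³` (the dimension of its affine hull). -/
def setDim (A : Set E3) : ℕ := Module.finrank ℝ ↥(vectorSpan ℝ A)

/-- A face of a polytope: a nonempty closed convex extreme subset. -/
def IsFaceOf (F P : Set E3) : Prop :=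
  F.Nonempty ∧ IsClosed F ∧ Convex ℝ F ∧ IsExtreme ℝ P F

/-- A facet: a `2`-dimensional face. -/
def IsFacetOf (F P : Set E3) : Prop := IsFaceOf F P ∧ setDim F = 2

/-- An edge: a `1`-dimensional face. -/
def IsEdgeOf (F P : Set E3) : Prop := IsFaceOf F P ∧ setDim F = 1

/-- A vertex: a point whose singleton is a face. -/
def IsVertexOf (v : E3) (P : Set E3) : Prop := IsFaceOf {v} P

/-- The set of facets of `P`. -/
def facets (P : Set E3) : Set (Set E3) := {F | IsFacetOf F P}

/-- A simple 3-polytope: a 3-dimensional convex polytope each of whose vertices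
is contained in exactly 3 facets. -/
def IsSimplePolytope3 (P : Set E3) : Prop :=
  IsPolytope P ∧ setDim P = 3 ∧
    ∀ v : E3, IsVertexOf v P → {F | IsFacetOf F P ∧ v ∈ F}.ncard = 3

/-- The number of edges of a facet `F` of `P`. -/
def facetEdges (P F : Set E3) : ℕ := {e | IsEdgeOf e P ∧ e ⊆ F}.ncard

/-- `pVec P k` is the number of `k`-gonal facets of `P`. -/
def pVec (P : Set E3) (k : ℕ) : ℕ := {F | IsFacetOf F P ∧ facetEdges P F = k}.ncard

/-- A (mathematical) fullerene: a simple 3-polytope with all facets pentagons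
and hexagons. -/
def IsFullerene (P : Set E3) : Prop :=
  IsSimplePolytope3 P ∧ ∀ F, IsFacetOf F P → facetEdges P F = 5 ∨ facetEdges P F = 6

/-- A `k`-loop in `P` (`k ≥ 2`): a cyclic sequence of facets in which
(cyclically) consecutive facets intersect in an edge; a `1`-loop is a single facet. -/
def IsLoop (P : Set E3) {k : ℕ} (L : Fin k → Set E3) : Prop :=
  0 < k ∧ (∀ i, IsFacetOf (L i) P) ∧ (2 ≤ k → ∀ i, IsEdgeOf (L i ∩ L (nxt i)) P)

/-- A simple loop: a loop with pairwise different facets. -/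
def IsSimpleLoop (P : Set E3) {k : ℕ} (L : Fin k → Set E3) : Prop :=
  IsLoop P L ∧ Function.Injective L

/-- A `k`-belt (`k ≥ 3`): a `k`-loop such that for `k = 3` the three facets have empty
total intersection, and for `k ≥ 4` two facets intersect iff they are cyclically successive. -/
def IsBelt (P : Set E3) {k : ℕ} (L : Fin k → Set E3) : Prop :=
  3 ≤ k ∧ IsLoop P L ∧
    (k = 3 → ∀ i, L i ∩ L (nxt i) ∩ L (nxt (nxt i)) = ∅) ∧
    (4 ≤ k → ∀ p q, p ≠ q → ((L p ∩ L q).Nonempty ↔ q = nxt p ∨ p = nxt q))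

/-- A flag 3-polytope: a simple 3-polytope different from the tetrahedron
(i.e. not having exactly 4 facets) without 3-belts. -/
def IsFlag3Polytope (P : Set E3) : Prop :=
  IsSimplePolytope3 P ∧ (facets P).ncard ≠ 4 ∧ ∀ B : Fin 3 → Set E3, ¬ IsBelt P B

/-- `γ` is the simple edge-cycle of `P` traced by the cyclically ordered distinct
vertices `v 0, …, v (n-1)` (`n ≥ 3`), consecutive ones joined by edges of `P`. -/
def IsSimpleEdgeCycleVia (P γ : Set E3) {n : ℕ} (v : Fin n → E3) : Prop :=
  3 ≤ n ∧ Function.Injective v ∧ (∀ i, IsVertexOf (v i) P) ∧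
    (∀ i, IsEdgeOf (segment ℝ (v i) (v (nxt i))) P) ∧
    γ = ⋃ i, segment ℝ (v i) (v (nxt i))

/-- A simple edge-cycle in the graph of `P`. -/
def IsSimpleEdgeCycle (P γ : Set E3) : Prop :=
  ∃ (n : ℕ) (v : Fin n → E3), IsSimpleEdgeCycleVia P γ v

/-- `C` is a connected component of the set `A`. -/
def IsCompOf (C A : Set E3) : Prop := ∃ x ∈ A, C = connectedComponentIn A x

/-- The loop `L` is obtained by walking round the simple edge-cycle `γ` inside the
connected component `C` of `∂P ∖ γ`: the facets of `L` lie on the side `C`, and the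
edges of `γ`, in cyclic order, lie in the facets of `L` in cyclic order (the loop
index advancing exactly when the facet changes, and making exactly one turn). -/
def WalksRound (P γ C : Set E3) {k : ℕ} (L : Fin k → Set E3) : Prop :=
  IsLoop P L ∧ (∀ i, intrinsicInterior ℝ (L i) ⊆ C) ∧
    ∃ (n : ℕ) (v : Fin n → E3) (φ : Fin n → Fin k),
      IsSimpleEdgeCycleVia P γ v ∧
      (∀ i, segment ℝ (v i) (v (nxt i)) ⊆ L (φ i)) ∧
      (∀ i, φ (nxt i) = φ i ∨ φ (nxt i) = nxt (φ i)) ∧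
      Function.Surjective φ ∧
      (2 ≤ k → (Finset.univ.filter (fun i : Fin n => φ (nxt i) ≠ φ i)).card = k)

/-- Two loops border each other: they are obtained by walking round the same simple
edge-cycle `γ` in the two different connected components of `∂P ∖ γ`. -/
def Borders (P : Set E3) {k₁ k₂ : ℕ} (L₁ : Fin k₁ → Set E3) (L₂ : Fin k₂ → Set E3) : Prop :=
  ∃ γ C₁ C₂ : Set E3, IsCompOf C₁ (frontier P \ γ) ∧ IsCompOf C₂ (frontier P \ γ) ∧
    C₁ ≠ C₂ ∧ WalksRound P γ C₁ L₁ ∧ WalksRound P γ C₂ L₂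

/-- A loop surrounds the facet `F` if it borders the `1`-loop `(F)`. -/
def Surrounds (P : Set E3) {k : ℕ} (L : Fin k → Set E3) (F : Set E3) : Prop :=
  IsFacetOf F P ∧ Borders P L (fun _ : Fin 1 => F)

/-- The number of edges of `P` lying in the facet `F` and in the set `γ`. -/
def edgesInCommon (P F γ : Set E3) : ℕ := {e | IsEdgeOf e P ∧ e ⊆ F ∧ e ⊆ γ}.ncard
/-- A simple 3-polytope all of whose facets are pentagons and hexagons except for
at most one exceptional facet, which is a quadrangle or a heptagon. -/
def IsAlmostFullerene (P : Set E3) : Prop :=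
  IsSimplePolytope3 P ∧
    (∀ F, IsFacetOf F P → facetEdges P F ∈ ({4, 5, 6, 7} : Set ℕ)) ∧
    {F | IsFacetOf F P ∧ (facetEdges P F = 4 ∨ facetEdges P F = 7)}.ncard ≤ 1

/-- The (combinatorial) dodecahedron: a simple 3-polytope with all facets pentagons. -/
def IsDodecahedron (P : Set E3) : Prop :=
  IsSimplePolytope3 P ∧ ∀ F, IsFacetOf F P → facetEdges P F = 5

/-- `e` and `e'` are opposite edges of the hexagonal facet `H`: they are disjoint and no
edge of `H` meets both of them. -/
def OppositeEdges (P H e e' : Set E3) : Prop :=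
  IsEdgeOf e P ∧ IsEdgeOf e' P ∧ e ⊆ H ∧ e' ⊆ H ∧ e ∩ e' = ∅ ∧
    ∀ e'', IsEdgeOf e'' P → e'' ⊆ H → (e'' ∩ e).Nonempty → e'' ≠ e → e'' ∩ e' = ∅

/-- A cap: a pentagonal facet `F₀` together with a surrounding 5-belt of pentagons. -/
def IsCapOf (P F₀ : Set E3) (L : Fin 5 → Set E3) : Prop :=
  IsFacetOf F₀ P ∧ facetEdges P F₀ = 5 ∧ (∀ i, facetEdges P (L i) = 5) ∧
    IsBelt P L ∧ Surrounds P L F₀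

/-- The number of 5-belts of `P` (counted as sets of facets). -/
def fiveBeltCount (P : Set E3) : ℕ :=
  {S : Set (Set E3) | ∃ B : Fin 5 → Set E3, IsBelt P B ∧ S = Set.range B}.ncard

/-- The structure of the `k`-th fullerene of Family I: two caps separated by `k`
hexagonal 5-belts, each bordering the next (for `k = 0` the caps border each other,
giving the dodecahedron). -/
def FamilyI (P : Set E3) (k : ℕ) : Prop :=
  ∃ (F₀ F₀' : Set E3) (L L' : Fin 5 → Set E3) (B : ℕ → Fin 5 → Set E3),
    IsCapOf P F₀ L ∧ IsCapOf P F₀' L' ∧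
    (∀ i < k, IsBelt P (B i) ∧ ∀ j, facetEdges P (B i j) = 6) ∧
    (∀ i, i + 1 < k → Borders P (B i) (B (i + 1))) ∧
    (0 < k → Borders P L (B 0) ∧ Borders P (B (k - 1)) L') ∧
    (k = 0 → Borders P L L') ∧
    facets P = {F₀, F₀'} ∪ Set.range L ∪ Set.range L' ∪ ⋃ i ∈ Set.Iio k, Set.range (B i)

/-- `P` is obtained from `Q` by an `(s,k;t₀,t₁)`-truncation with new edge `Enew`:
`P` is cut off from `Q` by a halfspace `{f ≤ c}` whose boundary plane crosses exactly
two edges `E₀ ≠ E₁` of a `k`-gonal facet `F` of `Q`, cutting off exactly `s` vertices,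
all belonging to `F`; `G₀` and `G₁` are the facets meeting `F` along `E₀` and `E₁`, and
they are `t₀`- and `t₁`-gons; `Enew` is the new edge dividing `F`. -/
def IsTruncation (s k t₀ t₁ : ℕ) (Q P Enew : Set E3) : Prop :=
  IsSimplePolytope3 Q ∧ IsSimplePolytope3 P ∧
    ∃ (F E₀ E₁ G₀ G₁ : Set E3) (f : E3 →ₗ[ℝ] ℝ) (c : ℝ),
      IsFacetOf F Q ∧ facetEdges Q F = k ∧
      IsEdgeOf E₀ Q ∧ IsEdgeOf E₁ Q ∧ E₀ ≠ E₁ ∧ E₀ ⊆ F ∧ E₁ ⊆ F ∧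
      IsFacetOf G₀ Q ∧ IsFacetOf G₁ Q ∧ G₀ ≠ F ∧ G₁ ≠ F ∧ E₀ ⊆ G₀ ∧ E₁ ⊆ G₁ ∧
      facetEdges Q G₀ = t₀ ∧ facetEdges Q G₁ = t₁ ∧
      P = Q ∩ {x | f x ≤ c} ∧
      (∀ e, IsEdgeOf e Q → (∃ x ∈ e, c < f x) → (∃ x ∈ e, f x < c) → e = E₀ ∨ e = E₁) ∧
      (∃ x ∈ E₀, c < f x) ∧ (∃ x ∈ E₀, f x < c) ∧
      (∃ x ∈ E₁, c < f x) ∧ (∃ x ∈ E₁, f x < c) ∧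
      (∀ v, IsVertexOf v Q → f v ≠ c) ∧
      {v | IsVertexOf v Q ∧ c < f v}.ncard = s ∧
      (∀ v, IsVertexOf v Q → c < f v → v ∈ F) ∧
      Enew = F ∩ {x | f x = c}

/-- Combinatorial equivalence of polytopes: an inclusion-preserving bijection
between the sets of faces. -/
def CombEquiv (P Q : Set E3) : Prop :=
  ∃ φ : {A : Set E3 // IsFaceOf A P} ≃ {A : Set E3 // IsFaceOf A Q},
    ∀ A B : {A : Set E3 // IsFaceOf A P}, A.1 ⊆ B.1 ↔ (φ A).1 ⊆ (φ B).1

/-- Combinatorial equivalence sending the face `Ep` of `P` to the face `Eq` of `Q`. -/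
def CombEquivMapping (P Q Ep Eq : Set E3) : Prop :=
  ∃ φ : {A : Set E3 // IsFaceOf A P} ≃ {A : Set E3 // IsFaceOf A Q},
    (∀ A B : {A : Set E3 // IsFaceOf A P}, A.1 ⊆ B.1 ↔ (φ A).1 ⊆ (φ B).1) ∧
    ∀ h : IsFaceOf Ep P, ((φ ⟨Ep, h⟩) : {A : Set E3 // IsFaceOf A Q}).1 = Eq

/-- The straightening of `P` along the edge `E` is defined: `P` is combinatorially
obtained from some simple 3-polytope `Q` by an `(s,k)`-truncation whose new edge
corresponds to `E`. -/
def StraighteningDefined (P E : Set E3) : Prop :=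
  ∃ (s k t₀ t₁ : ℕ) (Q P₁ E₁ : Set E3),
    IsTruncation s k t₀ t₁ Q P₁ E₁ ∧ CombEquivMapping P P₁ E E₁

/-- `P` is obtained from `Q` by one of the truncations
`(1;4,5)`, `(1;5,5)`, `(2,6;4,5)`, `(2,6;5,5)`, `(2,6;5,6)`, `(2,7;5,5)`, `(2,7;5,6)`. -/
def FullereneStep (Q P : Set E3) : Prop :=
  ∃ (s k t₀ t₁ : ℕ) (Enew : Set E3), IsTruncation s k t₀ t₁ Q P Enew ∧
    ((s = 1 ∧ (({t₀, t₁} : Finset ℕ) = {4, 5} ∨ ({t₀, t₁} : Finset ℕ) = {5, 5})) ∨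
     (s = 2 ∧ k = 6 ∧ (({t₀, t₁} : Finset ℕ) = {4, 5} ∨ ({t₀, t₁} : Finset ℕ) = {5, 5} ∨
        ({t₀, t₁} : Finset ℕ) = {5, 6})) ∨
     (s = 2 ∧ k = 7 ∧ (({t₀, t₁} : Finset ℕ) = {5, 5} ∨ ({t₀, t₁} : Finset ℕ) = {5, 6})))



theorem relint_extend {F : Set E3} {x y : E3} (hx : x ∈ intrinsicInterior ℝ F)
    (hy : y ∈ affineSpan ℝ F) : ∃ ε : ℝ, 0 < ε ∧ x + ε • (x - y) ∈ F := by
  rw [mem_intrinsicInterior] at hx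
  obtain ⟨x', hx', rfl⟩ := hx
  let g : ℝ → affineSpan ℝ F := fun t => ⟨AffineMap.lineMap y (x' : E3) (1 + t),
    AffineMap.lineMap_mem _ hy x'.2⟩
  have hg : Continuous g := by
    apply Continuous.subtype_mk
    simp only [AffineMap.lineMap_apply, vsub_eq_sub, vadd_eq_add]
    fun_prop
  have hg0 : g 0 = x' := by
    apply Subtype.ext
    simp [g]
  have h1 : ∀ᶠ t in nhds (0 : ℝ), g t ∈ ((↑) ⁻¹' F : Set (affineSpan ℝ F)) := by
    apply hg.continuousAt.eventually_mem
    rw [hg0]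
    exact mem_interior_iff_mem_nhds.1 hx'
  have h2 : ∀ᶠ t in nhdsWithin (0 : ℝ) (Ioi 0), g t ∈ ((↑) ⁻¹' F : Set (affineSpan ℝ F)) :=
    h1.filter_mono nhdsWithin_le_nhds
  obtain ⟨ε, h, hε⟩ := (h2.and self_mem_nhdsWithin).exists
  refine ⟨ε, hε, ?_⟩
  have : (g ε : E3) ∈ F := h
  convert this using 1
  simp only [g, AffineMap.lineMap_apply, vsub_eq_sub, vadd_eq_add]
  module

theorem interior_extend {P : Set E3} {x : E3} (hx : x ∈ interior P) (u : E3) :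
    ∃ ε : ℝ, 0 < ε ∧ x + ε • u ∈ P := by
  have hg : Continuous (fun t : ℝ => x + t • u) := by fun_prop
  have h1 : ∀ᶠ t in nhds (0 : ℝ), x + t • u ∈ P := by
    apply hg.continuousAt.eventually_mem
    simpa using mem_interior_iff_mem_nhds.1 hx
  obtain ⟨ε, h, hε⟩ := ((h1.filter_mono nhdsWithin_le_nhds).and
    (self_mem_nhdsWithin (a := (0:ℝ)) (s := Ioi 0))).exists
  exact ⟨ε, hε, h⟩

theorem mem_openSegment_extend (x y : E3) {ε : ℝ} (hε : 0 < ε) :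
    x ∈ openSegment ℝ y (x + ε • (x - y)) := by
  have h : (1 + ε) ≠ 0 := by positivity
  have hb : (1 + ε)⁻¹ * (1 + ε) = 1 := inv_mul_cancel₀ h
  refine ⟨ε * (1 + ε)⁻¹, (1 + ε)⁻¹, by positivity, by positivity, by linarith, ?_⟩
  calc (ε * (1 + ε)⁻¹) • y + (1 + ε)⁻¹ • (x + ε • (x - y))
      = ((1 + ε)⁻¹ * (1 + ε)) • x := by
        generalize (1 + ε)⁻¹ = b
        module
    _ = x := by rw [hb, one_smul]

theorem extreme_extend {P F : Set E3} (hF : IsExtreme ℝ P F) {x y : E3} (hx : x ∈ F) (hy : y ∈ P)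
    {ε : ℝ} (hε : 0 < ε) (h : x + ε • (x - y) ∈ P) : y ∈ F :=
  hF.left_mem_of_mem_openSegment hy h hx (mem_openSegment_extend x y hε)

/-- Basic facts about a 3-polytope. -/
structure Pol3 (P : Set E3) : Prop where
  conv : Convex ℝ P
  comp : IsCompact P
  int : (interior P).Nonempty
  fin : (P.extremePoints ℝ).Finite
  dim : setDim P = 3
  hull : IsPolytope P

theorem poly_of {P : Set E3} (h : IsPolytope P) (hd : setDim P = 3) : Pol3 P := by
  obtain ⟨V, rfl⟩ := h
  have hc := convex_convexHull ℝ (V : Set E3)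
  have hne : (convexHull ℝ (V : Set E3)).Nonempty := by
    by_contra hne
    rw [Set.not_nonempty_iff_eq_empty] at hne
    rw [hne] at hd
    rw [setDim, vectorSpan_empty, finrank_bot] at hd
    omega
  refine ⟨hc, V.finite_toSet.isCompact_convexHull (𝕜 := ℝ), ?_, V.finite_toSet.subset extremePoints_convexHull_subset, hd, ⟨V, rfl⟩⟩
  rw [hc.interior_nonempty_iff_affineSpan_eq_top]
  rw [AffineSubspace.affineSpan_eq_top_iff_vectorSpan_eq_top_of_nonempty ℝ E3 E3 hne]
  apply Submodule.eq_top_of_finrank_eq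
  rw [setDim] at hd
  rw [hd]; simp

theorem face_functional {P F : Set E3} (hP : Pol3 P) (hF : IsFaceOf F P) (hd : setDim F ≠ 3) :
    ∃ (f : E3 →L[ℝ] ℝ) (c : ℝ), (∀ x ∈ P, f x ≤ c) ∧ (∀ x ∈ F, f x = c) ∧
      ∀ x ∈ interior P, f x < c := by
  have hdisj : Disjoint (interior P) F := by
    rw [Set.disjoint_left]
    intro x hx hxF
    apply hd
    have : F = P := by
      apply hF.2.2.2.subset.antisymm
      intro y hy
      obtain ⟨ε, hε, h⟩ := interior_extend hx (x - y)
      exact extreme_extend hF.2.2.2 hxF hy hε h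
    rw [this]; exact hP.dim
  obtain ⟨f, c, h1, h2⟩ := geometric_hahn_banach_open hP.conv.interior isOpen_interior hF.2.2.1 hdisj
  have h3 : ∀ x ∈ P, f x ≤ c := by
    intro x hx
    have : x ∈ closure (interior P) := by
      rw [hP.conv.closure_interior_eq_closure_of_nonempty_interior hP.int]
      exact subset_closure hx
    have hcl : IsClosed {x | f x ≤ c} := isClosed_le f.continuous continuous_const
    exact hcl.closure_subset_iff.2 (fun y hy => (h1 y hy).le) this
  exact ⟨f, c, h3, fun x hx => (h3 x (hF.2.2.2.subset hx)).antisymm (h2 x hx), h1⟩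

theorem finrank_ker {f : E3 →L[ℝ] ℝ} (hf : f ≠ 0) :
    Module.finrank ℝ (LinearMap.ker (f : E3 →ₗ[ℝ] ℝ)) = 2 := by
  have h := LinearMap.finrank_range_add_finrank_ker (f : E3 →ₗ[ℝ] ℝ)
  have h2 : LinearMap.range (f : E3 →ₗ[ℝ] ℝ) = ⊤ := by
    apply LinearMap.range_eq_top.2
    apply LinearMap.surjective
    intro h0; apply hf; ext x; exact congrArg (fun g => g x) h0
  rw [h2] at h
  simp at h
  omega

theorem vectorSpan_le_ker {G : Set E3} {f : E3 →L[ℝ] ℝ} {c : ℝ} (h : ∀ x ∈ G, f x = c) :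
    vectorSpan ℝ G ≤ LinearMap.ker (f : E3 →ₗ[ℝ] ℝ) := by
  rw [vectorSpan_def, Submodule.span_le]
  rintro _ ⟨x, hx, y, hy, rfl⟩
  simp [h x hx, h y hy]

theorem expface {P : Set E3} (hP : Pol3 P) {f : E3 →L[ℝ] ℝ} {c : ℝ} (h : ∀ x ∈ P, f x ≤ c)
    (hne : ∃ x ∈ P, f x = c) : IsFaceOf {x ∈ P | f x = c} P := by
  refine ⟨hne, ?_, ?_, ?_, ?_⟩
  · exact hP.comp.isClosed.inter (isClosed_eq f.continuous continuous_const)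
  · exact hP.conv.inter (convex_hyperplane (f : E3 →ₗ[ℝ] ℝ).isLinear c)
  · exact fun x hx => hx.1
  · rintro x hx y hy z hz ⟨a, b, ha, hb, hab, rfl⟩
    refine ⟨hx, ?_⟩
    have h1 := hz.2
    simp at h1
    have h2 := h x hx
    have h3 := h y hy
    by_contra hne
    have h4 : f x < c := lt_of_le_of_ne h2 hne
    have h5 : a * f x < a * c := mul_lt_mul_of_pos_left h4 ha
    have h6 : b * f y ≤ b * c := mul_le_mul_of_nonneg_left h3 hb.le
    have h7 : a * c + b * c = c := by rw [← add_mul, hab, one_mul]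
    linarith

theorem facet_functional {P F : Set E3} (hP : Pol3 P) (hF : IsFacetOf F P) :
    ∃ (f : E3 →L[ℝ] ℝ) (c : ℝ), (∀ x ∈ P, f x ≤ c) ∧ F = {x ∈ P | f x = c} ∧
      ∀ x ∈ interior P, f x < c := by
  obtain ⟨f, c, h1, h2, h3⟩ := face_functional hP hF.1 (by rw [hF.2]; norm_num)
  refine ⟨f, c, h1, ?_, h3⟩
  apply Subset.antisymm
  · exact fun x hx => ⟨hF.1.2.2.2.subset hx, h2 x hx⟩
  rintro y ⟨hy, hyc⟩
  obtain ⟨x, hx⟩ := Set.Nonempty.intrinsicInterior hF.1.2.2.1 hF.1.1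
  have hxF := intrinsicInterior_subset hx
  have hf : f ≠ 0 := by
    rintro rfl
    obtain ⟨p, hp⟩ := hP.int
    have := h3 p hp
    have := h2 x hxF
    simp at *; linarith
  have hk : vectorSpan ℝ F = LinearMap.ker (f : E3 →ₗ[ℝ] ℝ) := by
    apply Submodule.eq_of_le_of_finrank_eq (vectorSpan_le_ker h2)
    rw [finrank_ker hf]; exact hF.2
  have hya : y ∈ affineSpan ℝ F := by
    have : (y - x) ∈ vectorSpan ℝ F := by
      rw [hk]; simp [hyc, h2 x hxF]
    have h5 := vadd_mem_affineSpan_of_mem_affineSpan_of_mem_vectorSpan (mem_affineSpan ℝ hxF) this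
    simpa using h5
  obtain ⟨ε, hε, h⟩ := relint_extend hx hya
  exact extreme_extend hF.1.2.2.2 hxF hy hε (hF.1.2.2.2.subset h)

theorem facets_finite {P : Set E3} (hP : Pol3 P) : (facets P).Finite := by
  apply Set.Finite.of_finite_image (f := fun F => F.extremePoints ℝ)
  · apply hP.fin.powerset.subset
    rintro _ ⟨F, hF, rfl⟩
    exact hF.1.2.2.2.extremePoints_subset_extremePoints
  · intro F hF G hG h
    have h1 : ∀ F ∈ facets P, closure (convexHull ℝ (F.extremePoints ℝ)) = F := fun F hF =>
      closure_convexHull_extremePoints (hP.comp.of_isClosed_subset hF.1.2.1 hF.1.2.2.2.subset)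
        hF.1.2.2.1
    rw [← h1 F hF, ← h1 G hG]
    simp only at h
    rw [h]

theorem frontier_mem_facet {P : Set E3} (hP : Pol3 P) {x : E3} (hx : x ∈ frontier P) :
    ∃ F ∈ facets P, x ∈ F := by
  classical
  obtain ⟨V, hV⟩ := hP.hull
  have hVP : ∀ v ∈ V, v ∈ P := fun v hv => hV ▸ subset_convexHull ℝ _ hv
  have hxP : x ∈ P := hP.comp.isClosed.frontier_subset hx
  have hxi : x ∉ interior P := hx.2
  -- supporting functionals at x
  let S : Set (E3 →L[ℝ] ℝ) := {f | f ≠ 0 ∧ ∀ y ∈ P, f y ≤ f x}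
  have hS : S.Nonempty := by
    obtain ⟨f, hf⟩ := geometric_hahn_banach_open_point hP.conv.interior isOpen_interior hxi
    refine ⟨f, ?_, ?_⟩
    · rintro rfl
      obtain ⟨p, hp⟩ := hP.int
      simpa using hf p hp
    · intro y hy
      have : y ∈ closure (interior P) := by
        rw [hP.conv.closure_interior_eq_closure_of_nonempty_interior hP.int]
        exact subset_closure hy
      have hcl : IsClosed {y | f y ≤ f x} := isClosed_le f.continuous continuous_const
      exact hcl.closure_subset_iff.2 (fun y hy => (hf y hy).le) this
  let N : (E3 →L[ℝ] ℝ) → ℕ := fun f => (V.filter (fun v => f v = f x)).card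
  have hbdd : BddAbove (N '' S) := ⟨V.card, by
    rintro _ ⟨f, _, rfl⟩; exact Finset.card_filter_le _ _⟩
  obtain ⟨f, hfS, hfN⟩ := Nat.sSup_mem (hS.image N) hbdd
  have hmax : ∀ g ∈ S, N g ≤ N f := fun g hg => by
    rw [hfN]; exact le_csSup hbdd ⟨g, hg, rfl⟩
  have hface := expface hP hfS.2 ⟨x, hxP, rfl⟩
  set G := {y ∈ P | f y = f x} with hG
  refine ⟨G, ⟨hface, ?_⟩, hxP, rfl⟩
  have hle : vectorSpan ℝ G ≤ LinearMap.ker (f : E3 →ₗ[ℝ] ℝ) := vectorSpan_le_ker (fun y hy => hy.2)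
  by_contra hne
  have hlt : vectorSpan ℝ G < LinearMap.ker (f : E3 →ₗ[ℝ] ℝ) := by
    apply lt_of_le_of_ne hle
    intro h; apply hne
    rw [setDim, h, finrank_ker hfS.1]
  obtain ⟨u, huk, huG⟩ := SetLike.exists_of_lt hlt
  obtain ⟨g0, hg0u, hg0⟩ := Submodule.exists_le_ker_of_notMem huG
  have hgG : ∀ g1 : E3 →ₗ[ℝ] ℝ, vectorSpan ℝ G ≤ LinearMap.ker g1 → ∀ y ∈ G, g1 y = g1 x := by
    intro g1 h1 y hy
    have : y - x ∈ vectorSpan ℝ G := vsub_mem_vectorSpan ℝ hy ⟨hxP, rfl⟩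
    have := h1 this
    simp at this
    linarith
  -- a vertex with larger value
  have key : ∃ g : E3 →ₗ[ℝ] ℝ, g u ≠ 0 ∧ vectorSpan ℝ G ≤ LinearMap.ker g ∧ ∃ v ∈ V, g x < g v := by
    have : ∃ v ∈ V, g0 v ≠ g0 x := by
      by_contra hcon
      push Not at hcon
      have h1 : P ⊆ {y | g0 y = g0 x} := by
        rw [hV]
        exact convexHull_min (fun v hv => hcon v hv) (convex_hyperplane g0.isLinear _)
      obtain ⟨p, hp⟩ := hP.int
      obtain ⟨ε, hε, h⟩ := interior_extend hp u
      have h2 := h1 h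
      have h3 := h1 (interior_subset hp)
      simp at h2 h3
      rw [h3] at h2
      simp [hε.ne', hg0u] at h2
    obtain ⟨v, hv, hvx⟩ := this
    rcases lt_or_gt_of_ne hvx with h | h
    · refine ⟨-g0, by simpa using hg0u, ?_, v, hv, by simpa using h⟩
      intro y hy; simpa using hg0 hy
    · exact ⟨g0, hg0u, hg0, v, hv, h⟩
  obtain ⟨g, hgu, hg, v0, hv0, hgv0⟩ := key
  let T := V.filter (fun v => g x < g v)
  obtain ⟨w, hwT, hw⟩ := T.exists_min_image (fun v => (f x - f v) / (g v - g x)) ⟨v0, by simp [T, hv0, hgv0]⟩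
  simp only [T, Finset.mem_filter] at hwT hw
  have hposw : 0 < g w - g x := by linarith [hwT.2]
  have hfw : f w < f x := by
    apply lt_of_le_of_ne (hfS.2 w (hVP w hwT.1))
    intro h
    have := hgG g hg w ⟨hVP w hwT.1, h⟩
    linarith
  set t := (f x - f w) / (g w - g x) with ht
  have htpos : 0 < t := div_pos (by linarith) hposw
  let f' : E3 →L[ℝ] ℝ := f + t • (LinearMap.toContinuousLinearMap g)
  have hf' : ∀ y, f' y = f y + t * g y := fun y => by simp [f']
  have hV' : ∀ v ∈ V, f' v ≤ f' x := by
    intro v hv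
    rw [hf', hf']
    have h1 := hfS.2 v (hVP v hv)
    by_cases h : g x < g v
    · have h2 := hw v ⟨hv, h⟩
      rw [le_div_iff₀ (by linarith)] at h2
      linarith
    · push Not at h
      nlinarith
  have hf'S : f' ∈ S := by
    refine ⟨?_, ?_⟩
    · intro h
      have h1 := hf' u
      have h2 : f u = 0 := huk
      rw [h, h2] at h1
      simp [htpos.ne', hgu] at h1
    · intro y hy
      have h1 : P ⊆ {y | f' y ≤ f' x} := by
        rw [hV]
        exact convexHull_min (fun v hv => hV' v hv) (convex_halfSpace_le (f' : E3 →ₗ[ℝ] ℝ).isLinear _)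
      exact h1 hy
  have := hmax f' hf'S
  have hlt2 : N f < N f' := by
    apply Finset.card_lt_card
    rw [Finset.ssubset_iff_of_subset]
    · refine ⟨w, ?_, ?_⟩
      · simp only [Finset.mem_filter]
        refine ⟨hwT.1, ?_⟩
        rw [hf', hf', ht]
        field_simp
        ring
      · simp only [Finset.mem_filter, not_and]
        intro _; exact hfw.ne
    · intro v hv
      simp only [Finset.mem_filter] at hv ⊢
      refine ⟨hv.1, ?_⟩
      rw [hf', hf', hv.2, hgG g hg v ⟨hVP v hv.1, hv.2⟩]
  omega


/-- The facets containing the point `x`. -/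
def act (P : Set E3) (x : E3) : Set (Set E3) := {F | IsFacetOf F P ∧ x ∈ F}

/-- A simple 3-polytope together with its facet inequalities. -/
structure HR (P : Set E3) (f : Set E3 → E3 →L[ℝ] ℝ) (c : Set E3 → ℝ) : Prop where
  pol : Pol3 P
  simple : ∀ v : E3, IsVertexOf v P → (act P v).ncard = 3
  le : ∀ F ∈ facets P, ∀ x ∈ P, f F x ≤ c F
  eq : ∀ F ∈ facets P, ∀ x, x ∈ F ↔ x ∈ P ∧ f F x = c F
  mem : ∀ x, (∀ F ∈ facets P, f F x ≤ c F) → x ∈ P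
  nz : ∀ F ∈ facets P, f F ≠ 0

theorem exists_HR {P : Set E3} (h : IsSimplePolytope3 P) : ∃ f c, HR P f c := by
  have hP := poly_of h.1 h.2.1
  have h1 : ∀ F : Set E3, ∃ (f : E3 →L[ℝ] ℝ) (c : ℝ), F ∈ facets P → ((∀ x ∈ P, f x ≤ c) ∧
    F = {x ∈ P | f x = c} ∧ ∀ x ∈ interior P, f x < c) := by
    intro F
    by_cases hF : F ∈ facets P
    · obtain ⟨f, c, h⟩ := facet_functional hP hF
      exact ⟨f, c, fun _ => h⟩
    · exact ⟨0, 0, fun h => absurd h hF⟩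
  choose f c hfc using h1
  refine ⟨f, c, hP, h.2.2, fun F hF => (hfc F hF).1, ?_, ?_, ?_⟩
  · intro F hF x
    conv_lhs => rw [(hfc F hF).2.1]
    rfl
  · intro x hx
    by_contra hxP
    obtain ⟨p, hp⟩ := hP.int
    let K : Set ℝ := Icc 0 1 ∩ (fun t : ℝ => p + t • (x - p)) ⁻¹' P
    have hK : IsCompact K := isCompact_Icc.inter_right
      (hP.comp.isClosed.preimage (by fun_prop))
    obtain ⟨t, htK, ht⟩ := hK.exists_isMaxOn ⟨0, by simp [K, interior_subset hp]⟩ continuousOn_id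
    have ht' : ∀ s ∈ K, s ≤ t := fun s hs => ht hs
    have ht1 : t < 1 := by
      apply lt_of_le_of_ne htK.1.2
      rintro rfl
      apply hxP
      simpa [K] using htK.2
    have hy : p + t • (x - p) ∈ frontier P := by
      refine ⟨subset_closure htK.2, ?_⟩
      intro hi
      have hg : Continuous (fun s : ℝ => p + s • (x - p)) := by fun_prop
      have h1 : ∀ᶠ s in nhds t, p + s • (x - p) ∈ P :=
        hg.continuousAt.eventually_mem (mem_interior_iff_mem_nhds.1 hi)
      have h2 : ∀ᶠ s in nhds t, s < 1 := eventually_lt_nhds ht1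
      obtain ⟨s, ⟨hs1, hs2⟩, hs3⟩ := (((h1.and h2).filter_mono nhdsWithin_le_nhds).and
        (self_mem_nhdsWithin (a := t) (s := Ioi t))).exists
      have := ht' s ⟨⟨htK.1.1.trans (le_of_lt hs3), hs2.le⟩, hs1⟩
      exact absurd hs3 (not_lt.2 this)
    obtain ⟨F, hF, hyF⟩ := frontier_mem_facet hP hy
    rw [(hfc F hF).2.1] at hyF
    have h3 := hyF.2
    have h4 := (hfc F hF).2.2 p hp
    have h5 := hx F hF
    have h0 := htK.1.1
    simp at h3
    nlinarith
  · intro F hF h0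
    obtain ⟨p, hp⟩ := hP.int
    obtain ⟨x, hx⟩ := hF.1.1
    have h4 := (hfc F hF).2.2 p hp
    rw [(hfc F hF).2.1] at hx
    have h5 := hx.2
    rw [h0] at h4 h5
    simp at h4 h5
    linarith

theorem isVertexOf_iff {P : Set E3} {v : E3} : IsVertexOf v P ↔ v ∈ P.extremePoints ℝ := by
  rw [← isExtreme_singleton]
  exact ⟨fun h => h.2.2.2, fun h => ⟨singleton_nonempty v, isClosed_singleton, convex_singleton v, h⟩⟩

namespace HR
variable {P : Set E3} {f : Set E3 → E3 →L[ℝ] ℝ} {c : Set E3 → ℝ}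

theorem fin (h : HR P f c) : (facets P).Finite := facets_finite h.pol

theorem act_fin (h : HR P f c) (x : E3) : (act P x).Finite := h.fin.subset fun _ hF => hF.1

theorem sub (h : HR P f c) {F x} (hF : F ∈ facets P) (hx : x ∈ F) : x ∈ P := ((h.eq F hF x).1 hx).1

theorem val (h : HR P f c) {F x} (hF : F ∈ facets P) (hx : x ∈ F) : f F x = c F :=
  ((h.eq F hF x).1 hx).2

theorem lt (h : HR P f c) {F x} (hF : F ∈ facets P) (hx : x ∈ P) (hxF : x ∉ F) : f F x < c F :=
  lt_of_le_of_ne (h.le F hF x hx) fun he => hxF ((h.eq F hF x).2 ⟨hx, he⟩)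

theorem feasible (h : HR P f c) {x u : E3} (hx : x ∈ P) (hu : ∀ F ∈ act P x, f F u ≤ 0) :
    ∃ ε : ℝ, 0 < ε ∧ x + ε • u ∈ P := by
  have h1 : ∀ F ∈ facets P, ∀ᶠ t in nhdsWithin (0 : ℝ) (Ioi 0), f F (x + t • u) ≤ c F := by
    intro F hF
    by_cases hxF : x ∈ F
    · filter_upwards [self_mem_nhdsWithin] with t ht
      have ht : 0 < t := ht
      have h2 := hu F ⟨hF, hxF⟩
      simp only [map_add, map_smul, smul_eq_mul, h.val hF hxF]
      nlinarith
    · have hg : Continuous (fun t : ℝ => f F (x + t • u)) := by fun_prop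
      have h2 : ∀ᶠ t in nhds (0 : ℝ), f F (x + t • u) < c F := by
        apply hg.continuousAt.eventually_lt continuousAt_const
        simpa using h.lt hF hx hxF
      exact (h2.filter_mono nhdsWithin_le_nhds).mono fun t ht => ht.le
  have h2 := (Set.Finite.eventually_all (l := nhdsWithin (0 : ℝ) (Ioi 0)) h.fin
    (p := fun F t => f F (x + t • u) ≤ c F)).2 h1
  obtain ⟨ε, h3, hε⟩ := (h2.and self_mem_nhdsWithin).exists
  exact ⟨ε, hε, h.mem _ h3⟩

theorem vertex_mem (_ : HR P f c) {v} (hv : IsVertexOf v P) : v ∈ P := (isVertexOf_iff.1 hv).1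

theorem ker_zero (h : HR P f c) {v u : E3} (hv : IsVertexOf v P) (hu : ∀ F ∈ act P v, f F u = 0) :
    u = 0 := by
  obtain ⟨ε, hε, h1⟩ := h.feasible (h.vertex_mem hv) (fun F hF => (hu F hF).le)
  obtain ⟨δ, hδ, h2⟩ := h.feasible (u := -u) (h.vertex_mem hv) (fun F hF => by simp [hu F hF])
  have h3 := (isVertexOf_iff.1 hv).2 h1 h2 (by
    refine ⟨δ / (ε + δ), ε / (ε + δ), by positivity, by positivity, by field_simp; ring, ?_⟩
    have : δ / (ε + δ) + ε / (ε + δ) = 1 := by field_simp; ring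
    calc _ = (δ / (ε + δ) + ε / (ε + δ)) • v + ((δ / (ε + δ)) * ε - (ε / (ε + δ)) * δ) • u := by module
      _ = v := by
        rw [this]
        have : (δ / (ε + δ)) * ε - (ε / (ε + δ)) * δ = 0 := by ring
        rw [this]; simp)
  have h4 : ε • u = 0 := by simpa using h3
  exact (smul_eq_zero.1 h4).resolve_left hε.ne'

theorem facet_extreme (_ : HR P f c) {F} (hF : F ∈ facets P) : IsExtreme ℝ P F := hF.1.2.2.2

theorem exists_vertex (h : HR P f c) {x : E3} (hx : x ∈ P) :
    ∃ v, IsVertexOf v P ∧ act P x ⊆ act P v := by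
  let Q : Set E3 := P ∩ ⋂ F ∈ act P x, F
  have hQ : IsCompact Q := h.pol.comp.inter_right
    (isClosed_biInter fun F hF => hF.1.1.2.1)
  have hE : IsExtreme ℝ P Q := by
    refine ⟨inter_subset_left, ?_⟩
    intro a ha b hb z hz hzab
    refine ⟨ha, ?_⟩
    have h2 := hz.2
    simp only [mem_iInter] at h2 ⊢
    intro F hF
    exact hF.1.1.2.2.2.left_mem_of_mem_openSegment ha hb (h2 F hF) hzab
  obtain ⟨v, hv⟩ := hQ.extremePoints_nonempty ⟨x, hx, by simp only [mem_iInter]; exact fun F hF => hF.2⟩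
  refine ⟨v, isVertexOf_iff.2 (hE.extremePoints_subset_extremePoints hv), ?_⟩
  intro F hF
  have h2 := hv.1.2
  simp only [mem_iInter] at h2
  exact ⟨hF.1, h2 F hF⟩

theorem act_le (h : HR P f c) {x : E3} (hx : x ∈ P) : (act P x).ncard ≤ 3 := by
  obtain ⟨v, hv, h1⟩ := h.exists_vertex hx
  rw [← h.simple v hv]
  exact Set.ncard_le_ncard h1 (h.act_fin v)

theorem eq_of_act (h : HR P f c) {v x : E3} (hv : IsVertexOf v P) (h1 : act P v ⊆ act P x) : x = v := by
  have : x - v = 0 := h.ker_zero hv fun F hF => by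
    rw [map_sub, h.val (h1 hF).1 (h1 hF).2, h.val hF.1 hF.2, sub_self]
  exact sub_eq_zero.1 this

theorem vertex_of_act (h : HR P f c) {x : E3} (hx : x ∈ P) (h3 : 3 ≤ (act P x).ncard) :
    IsVertexOf x P := by
  obtain ⟨v, hv, h1⟩ := h.exists_vertex hx
  have h2 : act P x = act P v := Set.eq_of_subset_of_ncard_le h1 (by rw [h.simple v hv]; exact h3)
    (h.act_fin v)
  have := h.eq_of_act (x := x) hv h2.ge
  rwa [this]

theorem dual (h : HR P f c) {v : E3} (hv : IsVertexOf v P) (a : Set E3 → ℝ) :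
    ∃ u : E3, ∀ F ∈ act P v, f F u = a F := by
  have : Fintype (act P v) := (h.act_fin v).fintype
  let T : E3 →ₗ[ℝ] (act P v → ℝ) := LinearMap.pi fun F => (f F.1 : E3 →ₗ[ℝ] ℝ)
  have hinj : Function.Injective T := by
    rw [← LinearMap.ker_eq_bot, LinearMap.ker_eq_bot']
    intro u hu
    apply h.ker_zero hv
    intro F hF
    exact congrFun hu ⟨F, hF⟩
  have hsurj : Function.Surjective T := by
    apply (LinearMap.injective_iff_surjective_of_finrank_eq_finrank ?_).1 hinj
    rw [Module.finrank_fintype_fun_eq_card, ← Set.toFinset_card, ← Set.ncard_eq_toFinset_card',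
      h.simple v hv]
    simp
  obtain ⟨u, hu⟩ := hsurj (fun F => a F.1)
  exact ⟨u, fun F hF => congrFun hu ⟨F, hF⟩⟩

/-- A point on three distinct facets is a vertex with exactly these facets. -/
theorem triple (h : HR P f c) {F G H : Set E3} (hF : F ∈ facets P) (hG : G ∈ facets P)
    (hH : H ∈ facets P) (hFG : F ≠ G) (hFH : F ≠ H) (hGH : G ≠ H) {x : E3} (xF : x ∈ F)
    (xG : x ∈ G) (xH : x ∈ H) : IsVertexOf x P ∧ act P x = {F, G, H} := by
  have hx := h.sub hF xF
  have h3 : ({F, G, H} : Set (Set E3)).ncard = 3 := by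
    rw [Set.ncard_eq_three]; exact ⟨F, G, H, hFG, hFH, hGH, rfl⟩
  have hsub : ({F, G, H} : Set (Set E3)) ⊆ act P x := by
    rintro K (rfl | rfl | rfl)
    · exact ⟨hF, xF⟩
    · exact ⟨hG, xG⟩
    · exact ⟨hH, xH⟩
  have heq := Set.eq_of_subset_of_ncard_le hsub (by rw [h3]; exact h.act_le hx) (h.act_fin x)
  exact ⟨h.vertex_of_act hx (by rw [← heq, h3]), heq.symm⟩

theorem third (h : HR P f c) {F G : Set E3} (hFG : F ≠ G) {v : E3}
    (hv : IsVertexOf v P) (vF : F ∈ act P v) (vG : G ∈ act P v) :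
    ∃ H ∈ facets P, H ≠ F ∧ H ≠ G ∧ v ∈ H ∧ act P v = {F, G, H} := by
  have h3 := h.simple v hv
  have : ∃ H ∈ act P v, H ∉ ({F, G} : Set (Set E3)) := by
    refine Set.exists_mem_notMem_of_ncard_lt_ncard ?_ (Set.toFinite _)
    rw [Set.ncard_pair hFG, h3]; omega
  obtain ⟨H, hH, hH2⟩ := this
  simp only [mem_insert_iff, mem_singleton_iff, not_or] at hH2
  exact ⟨H, hH.1, hH2.1, hH2.2, hH.2,
    (h.triple vF.1 vG.1 hH.1 hFG (Ne.symm hH2.1) (Ne.symm hH2.2) vF.2 vG.2 hH.2).2⟩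

/-- The structure of the intersection of two facets, from a vertex on it. -/
theorem edge_from (h : HR P f c) {F G H : Set E3} {v : E3} (hv : IsVertexOf v P)
    (hact : act P v = {F, G, H}) (hFG : F ≠ G) (hHF : H ≠ F) (hHG : H ≠ G) :
    ∃ (u b : E3) (H' : Set E3) (T : ℝ), 0 < T ∧ f F u = 0 ∧ f G u = 0 ∧ f H u = -1 ∧ b = v + T • u ∧
      F ∩ G = segment ℝ v b ∧ vectorSpan ℝ (F ∩ G) = Submodule.span ℝ {u} ∧ u ≠ 0 ∧ IsVertexOf b P ∧
      act P b = {F, G, H'} ∧ H' ≠ F ∧ H' ≠ G ∧ H' ≠ H ∧ H' ∈ facets P := by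
  have hFa : F ∈ act P v := by rw [hact]; simp
  have hGa : G ∈ act P v := by rw [hact]; simp
  have hHa : H ∈ act P v := by rw [hact]; simp
  classical
  obtain ⟨u, hu⟩ := h.dual hv (fun X => if X = H then -1 else 0)
  have huF : f F u = 0 := by rw [hu F hFa, if_neg (Ne.symm hHF)]
  have huG : f G u = 0 := by rw [hu G hGa, if_neg (Ne.symm hHG)]
  have huH : f H u = -1 := by rw [hu H hHa, if_pos rfl]
  have hu0 : u ≠ 0 := by rintro rfl; simp at huH
  have hker : ∀ w, f F w = 0 → f G w = 0 → w = (-(f H w)) • u := by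
    intro w h1 h2
    have : w + (f H w) • u = 0 := h.ker_zero hv (by
      rw [hact]
      rintro K (rfl | rfl | rfl)
      · simp [h1, huF]
      · simp [h2, huG]
      · simp [huH])
    rw [neg_smul]; exact eq_neg_of_add_eq_zero_left this
  have hFc : IsCompact (F ∩ G) := (h.pol.comp.of_isClosed_subset (hFa.1.1.2.1.inter hGa.1.1.2.1)
    (fun x hx => h.sub hFa.1 hx.1))
  obtain ⟨b, hb, hbmin⟩ := hFc.exists_isMinOn ⟨v, hFa.2, hGa.2⟩ (f H).continuous.continuousOn
  have hbm : ∀ y ∈ F ∩ G, f H b ≤ f H y := fun y hy => hbmin hy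
  have hrep : ∀ y ∈ F ∩ G, y = v + (c H - f H y) • u := by
    intro y hy
    have := hker (y - v) (by rw [map_sub, h.val hFa.1 hy.1, h.val hFa.1 hFa.2, sub_self])
      (by rw [map_sub, h.val hGa.1 hy.2, h.val hGa.1 hGa.2, sub_self])
    rw [map_sub, h.val hHa.1 hHa.2, neg_sub] at this
    rw [← this]; abel
  have hconv : Convex ℝ (F ∩ G) := hFa.1.1.2.2.1.inter hGa.1.1.2.2.1
  have hmove : ∀ x ∈ F ∩ G, ∀ t : ℝ, x + t • u ∈ P → x + t • u ∈ F ∩ G := by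
    intro x hx t hxt
    exact ⟨(h.eq F hFa.1 _).2 ⟨hxt, by simp [huF, h.val hFa.1 hx.1]⟩,
      (h.eq G hGa.1 _).2 ⟨hxt, by simp [huG, h.val hGa.1 hx.2]⟩⟩
  obtain ⟨ε, hε, hεP⟩ := h.feasible (u := u) (h.vertex_mem hv) (by
    rw [hact]
    rintro K (rfl | rfl | rfl)
    · exact huF.le
    · exact huG.le
    · rw [huH]; norm_num)
  have hεFG := hmove v ⟨hFa.2, hGa.2⟩ ε hεP
  have hTpos : 0 < c H - f H b := by
    have := hbm _ hεFG
    simp [huH, h.val hHa.1 hHa.2] at this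
    linarith
  have hseg : F ∩ G = segment ℝ v b := by
    apply Subset.antisymm
    · intro y hy
      have h1 := hrep y hy
      have h2 := hrep b hb
      have h3 := hbm y hy
      have h4 := h.le H hHa.1 y (h.sub hFa.1 hy.1)
      rw [segment_eq_image']
      refine ⟨(c H - f H y) / (c H - f H b), ⟨by apply div_nonneg <;> linarith, ?_⟩, ?_⟩
      · rw [div_le_one hTpos]; linarith
      · have h5 : b - v = (c H - f H b) • u := by
          nth_rewrite 1 [h2]; abel
        simp only
        rw [h5, smul_smul, div_mul_cancel₀ _ hTpos.ne', ← h1]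
    · exact hconv.segment_subset ⟨hFa.2, hGa.2⟩ hb
  have hspan : vectorSpan ℝ (F ∩ G) = Submodule.span ℝ {u} := by
    apply le_antisymm
    · rw [vectorSpan_def, Submodule.span_le]
      rintro _ ⟨x, hx, y, hy, rfl⟩
      rw [SetLike.mem_coe, Submodule.mem_span_singleton]
      refine ⟨_, (hker (x - y) ?_ ?_).symm⟩
      · rw [map_sub, h.val hFa.1 hx.1, h.val hFa.1 hy.1, sub_self]
      · rw [map_sub, h.val hGa.1 hx.2, h.val hGa.1 hy.2, sub_self]
    · rw [Submodule.span_singleton_le_iff_mem]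
      have := vsub_mem_vectorSpan ℝ hεFG (⟨hFa.2, hGa.2⟩ : v ∈ F ∩ G)
      simp only [vsub_eq_sub, add_sub_cancel_left] at this
      exact (Submodule.smul_mem_iff _ hε.ne').1 this
  have hbH' : ∃ H' ∈ act P b, H' ≠ F ∧ H' ≠ G := by
    by_contra hcon
    push Not at hcon
    obtain ⟨δ, hδ, hδP⟩ := h.feasible (u := u) (h.sub hFa.1 hb.1) (fun K hK => by
      by_cases hKF : K = F
      · rw [hKF]; exact huF.le
      · rw [hcon K hK hKF]; exact huG.le)
    have := hbm _ (hmove b hb δ hδP)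
    simp [huH] at this
    linarith
  obtain ⟨H', hH', hH'F, hH'G⟩ := hbH'
  obtain ⟨hbv, hbact⟩ := h.triple hFa.1 hGa.1 hH'.1 hFG (Ne.symm hH'F) (Ne.symm hH'G) hb.1 hb.2 hH'.2
  refine ⟨u, b, H', c H - f H b, hTpos, huF, huG, huH, hrep b hb, hseg, hspan, hu0, hbv, hbact,
    hH'F, hH'G, ?_, hH'.1⟩
  rintro rfl
  have := h.val hH'.1 hH'.2
  linarith

theorem edge_inter (h : HR P f c) {F G : Set E3} (hF : F ∈ facets P) (hG : G ∈ facets P) (hFG : F ≠ G)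
    (hne : (F ∩ G).Nonempty) :
    ∃ (a b : E3) (H H' : Set E3), a ≠ b ∧ F ∩ G = segment ℝ a b ∧ IsVertexOf a P ∧ IsVertexOf b P ∧
      act P a = {F, G, H} ∧ act P b = {F, G, H'} ∧ H ≠ F ∧ H ≠ G ∧ H' ≠ F ∧ H' ≠ G ∧ H ≠ H' ∧
      H ∈ facets P ∧ H' ∈ facets P ∧ IsEdgeOf (F ∩ G) P := by
  obtain ⟨x, hx⟩ := hne
  obtain ⟨v, hv, hsub⟩ := h.exists_vertex (h.sub hF hx.1)
  obtain ⟨H, hH, hHF, hHG, hvH, hact⟩ := h.third hFG hv (hsub ⟨hF, hx.1⟩) (hsub ⟨hG, hx.2⟩)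
  obtain ⟨u, b, H', T, hT, huF, huG, huH, hb, hseg, hspan, hu0, hbv, hbact, hH'F, hH'G, hH'H, hH'f⟩ :=
    h.edge_from hv hact hFG hHF hHG
  refine ⟨v, b, H, H', ?_, hseg, hv, hbv, hact, hbact, hHF, hHG, hH'F, hH'G, Ne.symm hH'H, hH, hH'f, ⟨?_, ?_⟩⟩
  · rw [hb]; simp [hT.ne', hu0]
  · exact ⟨⟨x, hx⟩, hF.1.2.1.inter hG.1.2.1, hF.1.2.2.1.inter hG.1.2.2.1, hF.1.2.2.2.inter hG.1.2.2.2⟩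
  · rw [setDim, hspan, finrank_span_singleton hu0]

/-- Moving along an edge from `v` to improve a functional. -/
theorem improve (h : HR P f c) {v y : E3} (hv : IsVertexOf v P) (hy : y ∈ P) (l : E3 →L[ℝ] ℝ)
    (hl : l v < l y) : ∃ X ∈ act P v, y ∉ X ∧ ∃ v', IsVertexOf v' P ∧ act P v \ {X} ⊆ act P v' ∧
      l v < l v' := by
  classical
  have h3 := h.simple v hv
  obtain ⟨A, B, C, hAB, hAC, hBC, hact⟩ := Set.ncard_eq_three.1 h3
  have hdual : ∀ X, ∃ u : E3, ∀ F ∈ act P v, f F u = if F = X then -1 else 0 := fun X => h.dual hv _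
  choose u hu using hdual
  have hA : A ∈ act P v := by rw [hact]; simp
  have hB : B ∈ act P v := by rw [hact]; simp
  have hC : C ∈ act P v := by rw [hact]; simp
  have hrep : y - v = (c A - f A y) • u A + (c B - f B y) • u B + (c C - f C y) • u C := by
    rw [← sub_eq_zero]
    apply h.ker_zero hv
    intro F hF
    have hF' := hF
    rw [hact] at hF'
    rcases hF' with rfl | rfl | rfl
    · simp [hu _ _ hA, hAB, hAC, h.val hA.1 hA.2]
    · simp [hu _ _ hB, hAB.symm, hBC, h.val hB.1 hB.2]
    · simp [hu _ _ hC, hAC.symm, hBC.symm, h.val hC.1 hC.2]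
  have hl2 : 0 < (c A - f A y) * l (u A) + (c B - f B y) * l (u B) + (c C - f C y) * l (u C) := by
    have := congrArg l hrep
    simp only [map_sub, map_add, map_smul, smul_eq_mul] at this
    linarith
  have hX : ∃ X Y Z, act P v = {Y, Z, X} ∧ Y ≠ Z ∧ X ≠ Y ∧ X ≠ Z ∧ 0 < (c X - f X y) * l (u X) := by
    by_contra hcon
    push Not at hcon
    have h1 := hcon A B C (by rw [hact]; ext; simp; tauto) hBC hAB hAC
    have h2 := hcon B A C (by rw [hact]; ext; simp; tauto) hAC hAB.symm hBC
    have h3 := hcon C A B (by rw [hact]) hAB hAC.symm hBC.symm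
    linarith
  obtain ⟨X, Y, Z, hact2, hYZ, hXY, hXZ, hpos⟩ := hX
  have hXa : X ∈ act P v := by rw [hact2]; simp
  have h4 := h.le X hXa.1 y hy
  have hyX : y ∉ X := by
    intro hyX
    rw [h.val hXa.1 hyX] at hpos
    simp at hpos
  have hlu : 0 < l (u X) := by
    by_contra hneg
    push Not at hneg
    nlinarith
  obtain ⟨w, b, H', T, hT, hwY, hwZ, hwX, hb, -, -, -, hbv, hbact, -⟩ := h.edge_from hv hact2 hYZ hXY hXZ
  have hw : w = u X := by
    rw [← sub_eq_zero]
    apply h.ker_zero hv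
    intro F hF
    rw [map_sub, hu X F hF]
    rw [hact2] at hF
    rcases hF with rfl | rfl | rfl
    · simp [hwY, hXY.symm]
    · simp [hwZ, hXZ.symm]
    · simp [hwX]
  refine ⟨X, hXa, hyX, b, hbv, ?_, ?_⟩
  · rw [hbact, hact2]
    rintro K ⟨hK, hKX⟩
    simp at hK hKX ⊢
    tauto
  · rw [hb, hw]
    simp only [map_add, map_smul, smul_eq_mul]
    nlinarith

theorem vertices_finite (h : HR P f c) : {v | IsVertexOf v P}.Finite := by
  apply h.pol.fin.subset
  intro v hv
  exact isVertexOf_iff.1 hv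

/-- Connectivity: a set of vertices closed under moving towards `w` contains `w`. -/
theorem connectivity (h : HR P f c) (W : Set E3) (hW : ∀ v ∈ W, IsVertexOf v P) (hne : W.Nonempty) {w : E3}
    (hw : IsVertexOf w P)
    (hcl : ∀ v ∈ W, ∀ X ∈ act P v, w ∉ X → ∀ v', IsVertexOf v' P → act P v \ {X} ⊆ act P v' → v' ∈ W) :
    w ∈ W := by
  have hWf : W.Finite := h.vertices_finite.subset hW
  have hfin := h.act_fin w
  let l : E3 →L[ℝ] ℝ := ∑ F ∈ hfin.toFinset, f F
  obtain ⟨v, hvW, hvmax⟩ := Set.exists_max_image W l hWf hne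
  by_contra hwW
  have hvw : v ≠ w := by rintro rfl; exact hwW hvW
  have hlt : l v < l w := by
    have h1 : ∃ F ∈ act P w, v ∉ F := by
      by_contra hcon
      push Not at hcon
      exact hvw (h.eq_of_act hw (fun F hF => ⟨hF.1, hcon F hF⟩))
    simp only [l, _root_.sum_apply]
    apply Finset.sum_lt_sum
    · intro F hF
      have hF : F ∈ act P w := by simpa using hF
      rw [h.val hF.1 hF.2]
      exact h.le F hF.1 v (h.vertex_mem (hW v hvW))
    · obtain ⟨F, hF, hvF⟩ := h1
      refine ⟨F, by simpa using hF, ?_⟩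
      rw [h.val hF.1 hF.2]
      exact h.lt hF.1 (h.vertex_mem (hW v hvW)) hvF
  obtain ⟨X, hX, hwX, v', hv', hsub, hlv'⟩ := h.improve (hW v hvW) (h.vertex_mem hw) l hlt
  exact absurd (hvmax v' (hcl v hvW X hX hwX v' hv' hsub)) (not_le.2 hlv')

end HR


/-- Three distinct facets with a common point. -/
def Tri (P F G H : Set E3) : Prop :=
  F ∈ facets P ∧ G ∈ facets P ∧ H ∈ facets P ∧ F ≠ G ∧ F ≠ H ∧ G ≠ H ∧ ∃ x, x ∈ F ∧ x ∈ G ∧ x ∈ H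

theorem Tri.swap {P F G H : Set E3} (h : Tri P F G H) : Tri P F H G := by
  obtain ⟨a, b, c, d, e, g, x, h1, h2, h3⟩ := h
  exact ⟨a, c, b, e, d, g.symm, x, h1, h3, h2⟩

theorem Tri.rot {P F G H : Set E3} (h : Tri P F G H) : Tri P G H F := by
  obtain ⟨a, b, c, d, e, g, x, h1, h2, h3⟩ := h
  exact ⟨b, c, a, g, d.symm, e.symm, x, h2, h3, h1⟩

theorem Tri.swap' {P F G H : Set E3} (h : Tri P F G H) : Tri P G F H := h.rot.swap

/-- The facets adjacent to `F`. -/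
def nbr (P F : Set E3) : Set (Set E3) := {G | G ∈ facets P ∧ F ≠ G ∧ (F ∩ G).Nonempty}

theorem Tri.nbr {P F G H : Set E3} (h : Tri P F G H) : G ∈ nbr P F :=
  let ⟨_, b, _, d, _, _, x, h1, h2, _⟩ := h
  ⟨b, d, x, h1, h2⟩

namespace HR
variable {P : Set E3} {f : Set E3 → E3 →L[ℝ] ℝ} {c : Set E3 → ℝ}

theorem edge_full (h : HR P f c) {F G : Set E3} (hF : F ∈ facets P) (hG : G ∈ facets P) (hFG : F ≠ G)
    (hne : (F ∩ G).Nonempty) :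
    ∃ (a b : E3) (H H' : Set E3), a ≠ b ∧ F ∩ G = segment ℝ a b ∧ IsVertexOf a P ∧ IsVertexOf b P ∧
      act P a = {F, G, H} ∧ act P b = {F, G, H'} ∧ Tri P F G H ∧ Tri P F G H' ∧ H ≠ H' ∧
      ∀ v, IsVertexOf v P → v ∈ F → v ∈ G → v = a ∨ v = b := by
  obtain ⟨a, b, H, H', hab, hseg, ha, hb, haa, hba, h1, h2, h3, h4, h5, h6, h7, h8⟩ :=
    h.edge_inter hF hG hFG hne
  have haH : H ∈ act P a := by rw [haa]; simp
  have hbH : H' ∈ act P b := by rw [hba]; simp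
  have ham : a ∈ F ∩ G := by rw [hseg]; exact left_mem_segment ℝ a b
  have hbm : b ∈ F ∩ G := by rw [hseg]; exact right_mem_segment ℝ a b
  refine ⟨a, b, H, H', hab, hseg, ha, hb, haa, hba, ⟨hF, hG, h6, hFG, h1.symm, h2.symm, a, ham.1, ham.2, haH.2⟩,
    ⟨hF, hG, h7, hFG, h3.symm, h4.symm, b, hbm.1, hbm.2, hbH.2⟩, h5, ?_⟩
  intro v hv hvF hvG
  have hvs : v ∈ segment ℝ a b := by rw [← hseg]; exact ⟨hvF, hvG⟩
  rw [← insert_endpoints_openSegment] at hvs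
  rcases hvs with rfl | rfl | hvs
  · exact Or.inl rfl
  · exact Or.inr rfl
  · exact Or.inl ((isVertexOf_iff.1 hv).2 (h.vertex_mem ha) (h.vertex_mem hb) hvs).symm

theorem tri_exists (h : HR P f c) {F G : Set E3} (hF : F ∈ facets P) (hG : G ∈ nbr P F) :
    ∃ H H', H ≠ H' ∧ Tri P F G H ∧ Tri P F G H' ∧ ∀ K, Tri P F G K → K = H ∨ K = H' := by
  obtain ⟨a, b, H, H', hab, hseg, ha, hb, haa, hba, t1, t2, hHH, hall⟩ :=
    h.edge_full hF hG.1 hG.2.1 hG.2.2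
  refine ⟨H, H', hHH, t1, t2, ?_⟩
  rintro K ⟨k1, k2, k3, k4, k5, k6, x, x1, x2, x3⟩
  obtain ⟨hx, hxa⟩ := h.triple k1 k2 k3 k4 k5 k6 x1 x2 x3
  have hK : K ∈ act P x := ⟨k3, x3⟩
  rcases hall x hx x1 x2 with rfl | rfl
  · rw [haa] at hK
    rcases hK with rfl | rfl | rfl
    · exact absurd rfl k5
    · exact absurd rfl k6
    · exact Or.inl rfl
  · rw [hba] at hK
    rcases hK with rfl | rfl | rfl
    · exact absurd rfl k5
    · exact absurd rfl k6
    · exact Or.inr rfl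

theorem tri_third (h : HR P f c) {F G A B K : Set E3} (hA : Tri P F G A) (hB : Tri P F G B) (hAB : A ≠ B)
    (hK : Tri P F G K) : K = A ∨ K = B := by
  obtain ⟨H, H', -, -, -, hall⟩ := h.tri_exists hA.1 hA.nbr
  have h1 := hall A hA
  have h2 := hall B hB
  have h3 := hall K hK
  rcases h1 with rfl | rfl <;> rcases h2 with rfl | rfl <;> rcases h3 with rfl | rfl <;> tauto

theorem tri_pt (h : HR P f c) {F G H : Set E3} (t : Tri P F G H) {x y : E3} (hx : x ∈ F ∧ x ∈ G ∧ x ∈ H)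
    (hy : y ∈ F ∧ y ∈ G ∧ y ∈ H) : x = y := by
  obtain ⟨k1, k2, k3, k4, k5, k6, -⟩ := t
  obtain ⟨h1, h2⟩ := h.triple k1 k2 k3 k4 k5 k6 hx.1 hx.2.1 hx.2.2
  obtain ⟨h3, h4⟩ := h.triple k1 k2 k3 k4 k5 k6 hy.1 hy.2.1 hy.2.2
  exact h.eq_of_act h3 (by rw [h2, h4])

theorem edge_eq_inter (h : HR P f c) {e F : Set E3} (he : IsEdgeOf e P) (hF : F ∈ facets P) (heF : e ⊆ F) :
    ∃ G ∈ nbr P F, e = F ∩ G := by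
  have hdim := he.2
  rw [setDim] at hdim
  -- two distinct points
  have hnt : e.Nontrivial := by
    by_contra hnt
    rw [Set.not_nontrivial_iff] at hnt
    rw [(vectorSpan_eq_bot_iff_subsingleton (k := ℝ)).2 hnt] at hdim
    simp at hdim
  obtain ⟨a, ha, b, hb, hab⟩ := hnt
  have heP := he.1.2.2.2
  have hab0 : b - a ≠ 0 := sub_ne_zero.2 hab.symm
  have hvs : vectorSpan ℝ e = Submodule.span ℝ {b - a} := by
    symm
    apply Submodule.eq_of_le_of_finrank_eq
    · rw [Submodule.span_singleton_le_iff_mem]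
      exact vsub_mem_vectorSpan ℝ hb ha
    · rw [finrank_span_singleton hab0, hdim]
  have hxab : midpoint ℝ a b ∈ openSegment ℝ a b := by
    rw [openSegment_eq_image_lineMap]
    exact ⟨1/2, by norm_num, by rw [midpoint]; congr 1; norm_num⟩
  set x := midpoint ℝ a b with hx
  have hxe : x ∈ e := he.1.2.2.1.segment_subset ha hb (openSegment_subset_segment _ _ _ hxab)
  have hxP := heP.subset hxe
  have hFx : F ∈ act P x := ⟨hF, heF hxe⟩
  have hG : ∃ G ∈ act P x, G ≠ F := by
    by_contra hcon
    push Not at hcon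
    have hlt : vectorSpan ℝ e < LinearMap.ker (f F : E3 →ₗ[ℝ] ℝ) := by
      apply lt_of_le_of_ne (vectorSpan_le_ker fun y hy => h.val hF (heF hy))
      intro h1
      rw [h1, finrank_ker (h.nz F hF)] at hdim
      omega
    obtain ⟨w, hw, hwe⟩ := SetLike.exists_of_lt hlt
    have hw0 : f F w = 0 := hw
    obtain ⟨ε, hε, h1⟩ := h.feasible (u := w) hxP (fun K hK => by rw [hcon K hK]; exact hw0.le)
    obtain ⟨δ, hδ, h2⟩ := h.feasible (u := x - (x + ε • w)) hxP (fun K hK => by rw [hcon K hK]; simp [hw0])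
    have h3 := extreme_extend heP hxe h1 hδ h2
    have h4 := vsub_mem_vectorSpan ℝ h3 hxe
    simp only [vsub_eq_sub, add_sub_cancel_left] at h4
    exact hwe ((Submodule.smul_mem_iff _ hε.ne').1 h4)
  obtain ⟨G, hG, hGF⟩ := hG
  have hone : ∀ K ∈ act P x, K = F ∨ K = G := by
    intro K hK
    by_contra hcon
    push Not at hcon
    have hv := (h.triple hF hG.1 hK.1 hGF.symm hcon.1.symm hcon.2.symm hFx.2 hG.2 hK.2).1
    have h1 := (mem_extremePoints.1 (isVertexOf_iff.1 hv)).2 a (heP.subset ha) b (heP.subset hb) hxab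
    exact hab (h1.1.trans h1.2.symm)
  refine ⟨G, ⟨hG.1, hGF.symm, x, hFx.2, hG.2⟩, ?_⟩
  apply Subset.antisymm
  · intro y hy
    refine ⟨heF hy, ?_⟩
    have haG := (h.facet_extreme hG.1).left_mem_of_mem_openSegment (heP.subset ha) (heP.subset hb) hG.2 hxab
    have hbG := (h.facet_extreme hG.1).right_mem_of_mem_openSegment (heP.subset ha) (heP.subset hb) hG.2 hxab
    have h1 := vsub_mem_vectorSpan ℝ hy ha
    rw [hvs, Submodule.mem_span_singleton] at h1
    obtain ⟨t, ht⟩ := h1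
    have h2 : y = a + t • (b - a) := by rw [ht]; simp
    refine (h.eq G hG.1 y).2 ⟨heP.subset hy, ?_⟩
    rw [h2]
    simp [h.val hG.1 haG, h.val hG.1 hbG]
  · intro y hy
    obtain ⟨δ, hδ, h2⟩ := h.feasible (u := x - y) hxP (fun K hK => by
      rcases hone K hK with rfl | rfl
      · rw [map_sub, h.val hF hFx.2, h.val hF hy.1, sub_self]
      · rw [map_sub, h.val hG.1 hG.2, h.val hG.1 hy.2, sub_self])
    exact extreme_extend heP hxe (h.sub hF hy.1) hδ h2

theorem facetEdges_eq (h : HR P f c) {F : Set E3} (hF : F ∈ facets P) :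
    facetEdges P F = (nbr P F).ncard := by
  rw [facetEdges]
  symm
  apply Set.ncard_congr (fun G _ => F ∩ G)
  · rintro G hG
    exact ⟨(h.edge_inter hF hG.1 hG.2.1 hG.2.2).choose_spec.choose_spec.choose_spec.choose_spec.2.2.2.2.2.2.2.2.2.2.2.2.2,
      inter_subset_left⟩
  · intro G G' hG hG' heq

    by_contra hne
    obtain ⟨a, b, H, H', hab, hseg, ha, hb, haa, hba, t1, t2, hHH, hall⟩ :=
      h.edge_full hF hG.1 hG.2.1 hG.2.2
    have ham : a ∈ F ∩ G := by rw [hseg]; exact left_mem_segment ℝ a b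
    have hbm : b ∈ F ∩ G := by rw [hseg]; exact right_mem_segment ℝ a b
    have ham' := ham
    have hbm' := hbm
    rw [heq] at ham' hbm'
    have h1 : Tri P F G G' := ⟨hF, hG.1, hG'.1, hG.2.1, hG'.2.1, hne, a, ham.1, ham.2, ham'.2⟩
    exact hab (h.tri_pt h1 ⟨ham.1, ham.2, ham'.2⟩ ⟨hbm.1, hbm.2, hbm'.2⟩)
  · rintro e ⟨he, heF⟩
    obtain ⟨G, hG, rfl⟩ := h.edge_eq_inter he hF heF
    exact ⟨G, hG, rfl⟩

theorem link_list (h : HR P f c) {F G H : Set E3} (t : Tri P F G H) :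
    ∃ l : List (Set E3), l.Nodup ∧ (∀ X, X ∈ l ↔ X ∈ nbr P F) ∧ l.head? = some G ∧
      l.getLast? = some H ∧ l.IsChain (Tri P F) := by
  classical
  have hfin : Finite (facets P) := h.fin.to_subtype
  let lk : SimpleGraph (facets P) :=
    { Adj := fun X Y => Tri P F X Y
      symm := ⟨fun X Y hXY => hXY.swap⟩
      loopless := ⟨fun X hX => hX.2.2.2.2.2.1 rfl⟩ }
  have hcyc : lk.IsCycles := by
    rintro X ⟨Y, hY⟩
    have hY : Tri P F X Y := hY
    obtain ⟨A, B, hAB, tA, tB, hall⟩ := h.tri_exists hY.1 hY.nbr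
    rw [Set.ncard_eq_two]
    refine ⟨⟨A, tA.2.2.1⟩, ⟨B, tB.2.2.1⟩, by simpa [Subtype.ext_iff] using hAB, ?_⟩
    ext K
    simp only [SimpleGraph.mem_neighborSet, mem_insert_iff, mem_singleton_iff, Subtype.ext_iff]
    constructor
    · intro hK; exact hall K hK
    · rintro (h1 | h1)
      · change Tri P F X K; rw [h1]; exact tA
      · change Tri P F X K; rw [h1]; exact tB
  let g : facets P := ⟨G, t.2.1⟩
  let hh : facets P := ⟨H, t.2.2.1⟩
  have hadj : lk.Adj g hh := t
  -- connectivity of the link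
  have hconn : ∀ X ∈ nbr P F, ∃ hX : X ∈ facets P, lk.Reachable g ⟨X, hX⟩ := by
    intro X hX
    obtain ⟨Y, -, -, tY, -⟩ := h.tri_exists t.1 hX
    obtain ⟨k1, k2, k3, k4, k5, k6, w, w1, w2, w3⟩ := tY
    obtain ⟨hw, -⟩ := h.triple k1 k2 k3 k4 k5 k6 w1 w2 w3
    let W : Set E3 := {v | IsVertexOf v P ∧ v ∈ F ∧ ∀ K ∈ act P v, K ≠ F →
      ∃ hK : K ∈ facets P, lk.Reachable g ⟨K, hK⟩}
    have hwW : w ∈ W := by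
      apply h.connectivity W (fun v hv => hv.1) ?_ hw
      · rintro v ⟨hv, hvF, hvK⟩ X' hX' hwX' v' hv' hsub
        have hFX' : F ≠ X' := by rintro rfl; exact hwX' w1
        have hFv : F ∈ act P v := ⟨t.1, hvF⟩
        obtain ⟨Z, hZ, hZF, hZX', hvZ, hactv⟩ := h.third hFX' hv hFv hX'
        have hFv' : F ∈ act P v' := hsub ⟨hFv, hFX'⟩
        have hZv' : Z ∈ act P v' := hsub ⟨⟨hZ, hvZ⟩, hZX'⟩
        refine ⟨hv', hFv'.2, ?_⟩
        intro K hK hKF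
        obtain ⟨hZ', hZr⟩ := hvK Z ⟨hZ, hvZ⟩ hZF
        by_cases hKZ : K = Z
        · subst hKZ; exact ⟨hZ', hZr⟩
        · refine ⟨hK.1, hZr.trans ?_⟩
          apply SimpleGraph.Adj.reachable
          exact ⟨t.1, hZ', hK.1, hZF.symm, hKF.symm, Ne.symm hKZ, v', hFv'.2, hZv'.2, hK.2⟩
      · obtain ⟨k1, k2, k3, k4, k5, k6, v, v1, v2, v3⟩ := t
        obtain ⟨hv, hva⟩ := h.triple k1 k2 k3 k4 k5 k6 v1 v2 v3
        refine ⟨v, hv, v1, ?_⟩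
        intro K hK hKF
        rw [hva] at hK
        rcases hK with rfl | rfl | rfl
        · exact absurd rfl hKF
        · exact ⟨k2, SimpleGraph.Reachable.refl _⟩
        · exact ⟨k3, hadj.reachable⟩
    exact hwW.2.2 X ⟨k2, w2⟩ k4.symm
  obtain ⟨p, hp, hpv⟩ := hcyc.exists_cycle_toSubgraph_verts_eq_connectedComponentSupp
    (v := g) (c := lk.connectedComponentMk g) rfl ⟨hh, hadj⟩
  have hp2 : ∃ p : lk.Walk g g, p.IsCycle ∧ (∀ X, X ∈ p.support ↔ lk.Reachable g X) ∧ p.snd = hh := by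
    have hs : ∀ X, X ∈ p.support ↔ lk.Reachable g X := by
      intro X
      rw [← SimpleGraph.Walk.mem_verts_toSubgraph, hpv, SimpleGraph.ConnectedComponent.mem_supp_iff,
        SimpleGraph.ConnectedComponent.eq]
      exact ⟨fun h => h.symm, fun h => h.symm⟩
    by_cases h1 : p.snd = hh
    · exact ⟨p, hp, hs, h1⟩
    · refine ⟨p.reverse, hp.reverse, by simpa using hs, ?_⟩
      rw [SimpleGraph.Walk.snd_reverse]
      have a1 : Tri P F g p.snd := p.adj_snd hp.not_nil
      have a2 : Tri P F g p.penultimate := (p.adj_penultimate hp.not_nil).symm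
      have hne := hp.snd_ne_penultimate
      rcases h.tri_third a1 a2 (fun h => hne (Subtype.ext h)) t with h2 | h2
      · exact absurd (Subtype.ext h2.symm) h1
      · exact (Subtype.ext h2.symm)
  obtain ⟨p, hp, hs, hsnd⟩ := hp2
  cases p with
  | nil => exact absurd hp (SimpleGraph.Walk.not_isCycle_nil)
  | @cons _ x _ hx q =>
    have hxh : x = hh := by simpa using hsnd
    subst hxh
    have hq := ((SimpleGraph.Walk.cons_isCycle_iff q hx).1 hp).1
    have hqs : ∀ X, X ∈ q.support ↔ lk.Reachable g X := by
      intro X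
      rw [← hs, SimpleGraph.Walk.support_cons, List.mem_cons]
      constructor
      · exact Or.inr
      · rintro (rfl | h1)
        · exact q.end_mem_support
        · exact h1
    refine ⟨(q.support.reverse).map Subtype.val, ?_, ?_, ?_, ?_, ?_⟩
    · exact (List.nodup_reverse.2 hq.support_nodup).map Subtype.val_injective
    · intro X
      simp only [List.mem_map, List.mem_reverse, hqs]
      constructor
      · rintro ⟨Y, hY, rfl⟩
        by_cases hgY : Y = g
        · rw [hgY]; exact t.nbr
        · obtain ⟨r⟩ := hY.symm
          have hr : Tri P F Y r.snd := r.adj_snd (SimpleGraph.Walk.not_nil_of_ne hgY)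
          exact hr.nbr
      · intro hX
        obtain ⟨hX', hr⟩ := hconn X hX
        exact ⟨⟨X, hX'⟩, hr, rfl⟩
    · rw [List.head?_map, List.head?_reverse, List.getLast?_eq_getLast_of_ne_nil q.support_ne_nil]
      simp [g]
    · rw [List.getLast?_map, List.getLast?_reverse, List.head?_eq_some_head q.support_ne_nil]
      simp [hh]
    · rw [List.isChain_map, List.isChain_reverse]
      apply q.isChain_adj_support.imp
      intro a b hab
      exact hab.symm

end HR


namespace HR
variable {P : Set E3} {f : Set E3 → E3 →L[ℝ] ℝ} {c : Set E3 → ℝ}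

theorem isEdge (h : HR P f c) {F G : Set E3} (hF : F ∈ facets P) (hG : G ∈ facets P) (hFG : F ≠ G)
    (hne : (F ∩ G).Nonempty) : IsEdgeOf (F ∩ G) P := by
  obtain ⟨_, _, _, _, h1⟩ := h.edge_inter hF hG hFG hne
  exact h1.2.2.2.2.2.2.2.2.2.2.2.2.2

theorem flag_tri (h : HR P f c) (hb : ∀ B : Fin 3 → Set E3, ¬ IsBelt P B) {F G H : Set E3}
    (hF : F ∈ facets P) (hG : G ∈ facets P) (hH : H ∈ facets P) (hFG : F ≠ G) (hFH : F ≠ H) (hGH : G ≠ H)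
    (h1 : (F ∩ G).Nonempty) (h2 : (F ∩ H).Nonempty) (h3 : (G ∩ H).Nonempty) : Tri P F G H := by
  refine ⟨hF, hG, hH, hFG, hFH, hGH, ?_⟩
  by_contra hcon
  push Not at hcon
  apply hb ![F, G, H]
  have n0 : nxt (0 : Fin 3) = 1 := rfl
  have n1 : nxt (1 : Fin 3) = 2 := rfl
  have n2 : nxt (2 : Fin 3) = 0 := rfl
  have hemp : ∀ x, x ∈ F → x ∈ G → x ∈ H → False := hcon
  refine ⟨le_rfl, ⟨by norm_num, ?_, ?_⟩, ?_, by omega⟩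
  · intro i; fin_cases i
    · exact hF
    · exact hG
    · exact hH
  · intro _ i; fin_cases i
    · exact h.isEdge hF hG hFG h1
    · exact h.isEdge hG hH hGH h3
    · exact h.isEdge hH hF hFH.symm (by rwa [inter_comm])
  · intro _ i
    apply Set.eq_empty_of_forall_notMem
    fin_cases i
    · rintro x ⟨⟨a, b⟩, d⟩; exact hemp x a b d
    · rintro x ⟨⟨a, b⟩, d⟩; exact hemp x d a b
    · rintro x ⟨⟨a, b⟩, d⟩; exact hemp x b d a

theorem no_K4 (h : HR P f c) (hb : ∀ B : Fin 3 → Set E3, ¬ IsBelt P B) (h4 : (facets P).ncard ≠ 4)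
    (S : Set (Set E3)) (hS : S ⊆ facets P) (hc : S.ncard = 4)
    (hpw : ∀ A ∈ S, ∀ B ∈ S, A ≠ B → (A ∩ B).Nonempty) : False := by
  have hSf : S.Finite := h.fin.subset hS
  have htri : ∀ A ∈ S, ∀ B ∈ S, ∀ C ∈ S, A ≠ B → A ≠ C → B ≠ C → Tri P A B C := by
    intro A hA B hB C hC hAB hAC hBC
    exact h.flag_tri hb (hS hA) (hS hB) (hS hC) hAB hAC hBC (hpw A hA B hB hAB) (hpw A hA C hC hAC)
      (hpw B hB C hC hBC)
  have hthird : ∀ A ∈ S, ∀ B ∈ S, A ≠ B → ∀ K, Tri P A B K → K ∈ S := by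
    intro A hA B hB hAB K hK
    have h2 : (S \ {A, B}).ncard = 2 := by
      rw [Set.ncard_sdiff (by rintro X (rfl | rfl) <;> assumption), hc, Set.ncard_pair hAB]
    obtain ⟨M, N, hMN, hMNe⟩ := Set.ncard_eq_two.1 h2
    have hM : M ∈ S \ {A, B} := by rw [hMNe]; simp
    have hN : N ∈ S \ {A, B} := by rw [hMNe]; simp
    have hM2 := hM.2
    have hN2 := hN.2
    simp only [mem_insert_iff, mem_singleton_iff, not_or] at hM2 hN2
    rcases h.tri_third (htri A hA B hB M hM.1 hAB (Ne.symm hM2.1) (Ne.symm hM2.2))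
      (htri A hA B hB N hN.1 hAB (Ne.symm hN2.1) (Ne.symm hN2.2)) hMN hK with rfl | rfl
    · exact hM.1
    · exact hN.1
  apply h4
  rw [← hc]
  congr 1
  apply Subset.antisymm _ hS
  intro X hX
  obtain ⟨x, hx⟩ := hX.1.1
  obtain ⟨w, hw, hsub⟩ := h.exists_vertex (h.sub hX hx)
  let W : Set E3 := {v | IsVertexOf v P ∧ act P v ⊆ S}
  have hwW : w ∈ W := by
    apply h.connectivity W (fun v hv => hv.1) ?_ hw
    · rintro v ⟨hv, hvS⟩ X' hX' - v' hv' hsub'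
      refine ⟨hv', ?_⟩
      have h2 : (act P v \ {X'}).ncard = 2 := by
        rw [Set.ncard_sdiff (by simpa using hX'), h.simple v hv, Set.ncard_singleton]
      obtain ⟨M, N, hMN, hMNe⟩ := Set.ncard_eq_two.1 h2
      have hM : M ∈ act P v \ {X'} := by rw [hMNe]; simp
      have hN : N ∈ act P v \ {X'} := by rw [hMNe]; simp
      intro K hK
      by_cases hKM : K = M
      · rw [hKM]; exact hvS hM.1
      by_cases hKN : K = N
      · rw [hKN]; exact hvS hN.1
      exact hthird M (hvS hM.1) N (hvS hN.1) hMN K ⟨hM.1.1, hN.1.1, hK.1, hMN, Ne.symm hKM, Ne.symm hKN, v',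
        (hsub' hM).2, (hsub' hN).2, hK.2⟩
    · obtain ⟨A, hA⟩ : S.Nonempty := by
        apply Set.nonempty_of_ncard_ne_zero; omega
      obtain ⟨B, hB, hBA⟩ := Set.exists_ne_of_one_lt_ncard (by omega : 1 < S.ncard) A
      obtain ⟨C, hC, hCAB⟩ : ∃ C ∈ S, C ∉ ({A, B} : Set (Set E3)) := by
        refine Set.exists_mem_notMem_of_ncard_lt_ncard ?_ (Set.toFinite _)
        rw [Set.ncard_pair hBA.symm, hc]; omega
      simp only [mem_insert_iff, mem_singleton_iff, not_or] at hCAB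
      obtain ⟨k1, k2, k3, k4, k5, k6, v, v1, v2, v3⟩ :=
        htri A hA B hB C hC hBA.symm (Ne.symm hCAB.1) (Ne.symm hCAB.2)
      obtain ⟨hv, hva⟩ := h.triple k1 k2 k3 k4 k5 k6 v1 v2 v3
      refine ⟨v, hv, ?_⟩
      rw [hva]
      rintro K (rfl | rfl | rfl) <;> assumption
  exact hwW.2 (hsub ⟨hX, hx⟩)

theorem nbr_fin (h : HR P f c) (F : Set E3) : (nbr P F).Finite := h.fin.subset fun _ hG => hG.1

theorem deg_ge (h : HR P f c) (hb : ∀ B : Fin 3 → Set E3, ¬ IsBelt P B) (h4 : (facets P).ncard ≠ 4)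
    {F G : Set E3} (hF : F ∈ facets P) (hG : G ∈ nbr P F) : 4 ≤ (nbr P F).ncard := by
  obtain ⟨H, H', hHH, t1, t2, -⟩ := h.tri_exists hF hG
  -- the second link neighbour of H
  obtain ⟨K, hK, tK⟩ : ∃ K, K ≠ G ∧ Tri P F H K := by
    obtain ⟨A, B, hAB, tA, tB, -⟩ := h.tri_exists hF t1.swap.nbr
    by_cases hA : A = G
    · exact ⟨B, by rw [← hA]; exact hAB.symm, tB⟩
    · exact ⟨A, hA, tA⟩
  have hKH' : K ≠ H' := by
    rintro rfl
    have e1 := t1.2.2.2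
    have e2 := t2.2.2.2
    have e3 := tK.2.2.2
    have i1 : (F ∩ G).Nonempty := t1.nbr.2.2
    have i2 : (F ∩ H).Nonempty := t1.swap.nbr.2.2
    have i3 : (F ∩ K).Nonempty := t2.swap.nbr.2.2
    have i4 : (G ∩ H).Nonempty := t1.rot.nbr.2.2
    have i5 : (G ∩ K).Nonempty := t2.rot.nbr.2.2
    have i6 : (H ∩ K).Nonempty := tK.rot.nbr.2.2
    have hFG := e1.1
    have hFH := e1.2.1
    have hGH := e1.2.2.1
    have hFK := e2.2.1
    refine h.no_K4 hb h4 {F, G, H, K} ?_ ?_ ?_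
    · rintro X (rfl | rfl | rfl | rfl)
      · exact hF
      · exact hG.1
      · exact t1.2.2.1
      · exact t2.2.2.1
    · rw [Set.ncard_eq_toFinset_card']
      simp [hFG, hFH, hGH, hFK, hK.symm, hHH]
    · rintro X (rfl | rfl | rfl | rfl) Y (rfl | rfl | rfl | rfl) hXY <;>
        first
        | exact absurd rfl hXY
        | assumption
        | (rw [inter_comm]; assumption)
  have hsub : ({G, H, H', K} : Set (Set E3)) ⊆ nbr P F := by
    rintro X (rfl | rfl | rfl | rfl)
    · exact hG
    · exact t1.swap.nbr
    · exact t2.swap.nbr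
    · exact tK.swap.nbr
  have hcard : ({G, H, H', K} : Set (Set E3)).ncard = 4 := by
    rw [Set.ncard_eq_toFinset_card']
    simp [t1.2.2.2.2.2.1, t2.2.2.2.2.2.1, hHH, hK.symm, tK.2.2.2.2.2.1, hKH'.symm]
  rw [← hcard]
  exact Set.ncard_le_ncard hsub (h.nbr_fin F)

end HR


/-- The union of the edges separating a facet of `I` from a facet outside `I`. -/
def gam (P : Set E3) (I : Set (Set E3)) : Set E3 :=
  {x | ∃ F ∈ I, ∃ G ∈ facets P, G ∉ I ∧ x ∈ F ∧ x ∈ G}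

namespace HR
variable {P : Set E3} {f : Set E3 → E3 →L[ℝ] ℝ} {c : Set E3 → ℝ}

theorem relint_act (h : HR P f c) {F : Set E3} (hF : F ∈ facets P) {x : E3}
    (hx : x ∈ intrinsicInterior ℝ F) : act P x = {F} := by
  have hxF : x ∈ F := intrinsicInterior_subset hx
  apply Subset.antisymm
  · rintro K ⟨hK, hxK⟩
    by_contra hne
    have hne : K ≠ F := hne
    have hsub : F ⊆ K := by
      intro y hy
      obtain ⟨ε, hε, h1⟩ := relint_extend hx (subset_affineSpan ℝ F hy)
      exact extreme_extend (h.facet_extreme hK) hxK (h.sub hF hy) hε (h.sub hF h1)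
    have h1 := h.isEdge hF hK hne.symm ⟨x, hxF, hxK⟩
    rw [inter_eq_left.2 hsub] at h1
    have := h1.2
    have h2 : setDim F = 2 := hF.2
    omega
  · rintro K rfl
    exact ⟨hF, hxF⟩

theorem facet_sub_frontier (h : HR P f c) {F : Set E3} (hF : F ∈ facets P) : F ⊆ frontier P := by
  intro x hx
  refine ⟨subset_closure (h.sub hF hx), fun hxi => ?_⟩
  have hsub : P ⊆ F := by
    intro y hy
    obtain ⟨ε, hε, h1⟩ := interior_extend hxi (x - y)
    exact extreme_extend (h.facet_extreme hF) hx hy hε h1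
  have heq : F = P := Subset.antisymm (fun y hy => h.sub hF hy) hsub
  have h1 := h.pol.dim
  have h2 : setDim F = 2 := hF.2
  rw [heq] at h2
  omega

theorem seg_comp (h : HR P f c) {I : Set (Set E3)} {F : Set E3} (hF : F ∈ facets P) {a m : E3}
    (ha : a ∈ F) (hm : m ∈ F) (ham : act P a ⊆ act P m)
    (hI : act P m ⊆ I ∨ ∀ K ∈ act P m, K ∉ I) (hIf : I ⊆ facets P) :
    connectedComponentIn (frontier P \ gam P I) a = connectedComponentIn (frontier P \ gam P I) m := by
  have hact : ∀ x ∈ segment ℝ a m, act P x ⊆ act P m := by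
    intro x hx
    rw [← insert_endpoints_openSegment] at hx
    rcases hx with rfl | rfl | hx
    · exact ham
    · exact Subset.rfl
    · rintro K ⟨hK, hxK⟩
      exact ⟨hK, (h.facet_extreme hK).right_mem_of_mem_openSegment (h.sub hF ha) (h.sub hF hm) hxK hx⟩
  have hsub : segment ℝ a m ⊆ frontier P \ gam P I := by
    intro x hx
    refine ⟨h.facet_sub_frontier hF (hF.1.2.2.1.segment_subset ha hm hx), ?_⟩
    rintro ⟨F', hF', G', hG', hG'I, xF, xG⟩
    have h1 := hact x hx ⟨hIf hF', xF⟩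
    have h2 := hact x hx ⟨hG', xG⟩
    rcases hI with hI | hI
    · exact hG'I (hI h2)
    · exact hI _ h1 hF'
  apply connectedComponentIn_eq
  exact (convex_segment a m).isPreconnected.subset_connectedComponentIn (left_mem_segment ℝ a m) hsub
    (right_mem_segment ℝ a m)

theorem relint_sub (h : HR P f c) {I : Set (Set E3)} (hIf : I ⊆ facets P) {F : Set E3} (hF : F ∈ facets P)
    {x : E3} (hx : x ∈ intrinsicInterior ℝ F) : x ∈ frontier P \ gam P I := by
  refine ⟨h.facet_sub_frontier hF (intrinsicInterior_subset hx), ?_⟩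
  rintro ⟨F', hF', G', hG', hG'I, xF, xG⟩
  have h1 : F' ∈ act P x := ⟨hIf hF', xF⟩
  have h2 : G' ∈ act P x := ⟨hG', xG⟩
  rw [h.relint_act hF hx] at h1 h2
  rw [mem_singleton_iff] at h1 h2
  rw [h2, ← h1] at hG'I
  exact hG'I hF'

theorem same_comp (h : HR P f c) {I : Set (Set E3)} (hIf : I ⊆ facets P) {F : Set E3} (hF : F ∈ facets P)
    {x y : E3} (hx : x ∈ intrinsicInterior ℝ F) (hy : y ∈ intrinsicInterior ℝ F) :
    connectedComponentIn (frontier P \ gam P I) x = connectedComponentIn (frontier P \ gam P I) y := by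
  refine h.seg_comp hF (intrinsicInterior_subset hx) (intrinsicInterior_subset hy) ?_ ?_ hIf
  · rw [h.relint_act hF hx, h.relint_act hF hy]
  · rw [h.relint_act hF hy]
    by_cases hI : F ∈ I
    · left; simpa using hI
    · right; simpa using hI

theorem adj_comp (h : HR P f c) {I : Set (Set E3)} (hIf : I ⊆ facets P) {F G : Set E3} (hF : F ∈ facets P)
    (hG : G ∈ facets P) (hFG : (F ∩ G).Nonempty) (hI : F ∈ I ↔ G ∈ I)
    {x y : E3} (hx : x ∈ intrinsicInterior ℝ F) (hy : y ∈ intrinsicInterior ℝ G) :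
    connectedComponentIn (frontier P \ gam P I) x = connectedComponentIn (frontier P \ gam P I) y := by
  by_cases hne : F = G
  · subst hne; exact h.same_comp hIf hF hx hy
  obtain ⟨a, b, H, H', hab, hseg, ha, hb, haa, hba, t1, t2, hHH, hall⟩ := h.edge_full hF hG hne hFG
  let m := midpoint ℝ a b
  have hmo : m ∈ openSegment ℝ a b := midpoint_mem_openSegment a b
  have hm : m ∈ F ∩ G := by rw [hseg]; exact openSegment_subset_segment ℝ a b hmo
  have hact : act P m = {F, G} := by
    apply Subset.antisymm
    · rintro K ⟨hK, hmK⟩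
      have h1 : K ∈ act P a := ⟨hK, (h.facet_extreme hK).left_mem_of_mem_openSegment (h.vertex_mem ha)
        (h.vertex_mem hb) hmK hmo⟩
      have h2 : K ∈ act P b := ⟨hK, (h.facet_extreme hK).right_mem_of_mem_openSegment (h.vertex_mem ha)
        (h.vertex_mem hb) hmK hmo⟩
      rw [haa] at h1
      rw [hba] at h2
      simp only [mem_insert_iff, mem_singleton_iff] at h1 h2 ⊢
      grind
    · rintro K (rfl | rfl)
      · exact ⟨hF, hm.1⟩
      · exact ⟨hG, hm.2⟩
  have hIm : act P m ⊆ I ∨ ∀ K ∈ act P m, K ∉ I := by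
    rw [hact]
    by_cases hFI : F ∈ I
    · left; rintro K (rfl | rfl)
      · exact hFI
      · exact hI.1 hFI
    · right; rintro K (rfl | rfl)
      · exact hFI
      · exact fun hG => hFI (hI.2 hG)
  rw [h.seg_comp hF (intrinsicInterior_subset hx) hm.1 (by rw [h.relint_act hF hx, hact]; simp) hIm hIf,
    h.seg_comp hG (intrinsicInterior_subset hy) hm.2 (by rw [h.relint_act hG hy, hact]; simp) hIm hIf]

theorem diff_comp (h : HR P f c) {I : Set (Set E3)} (hIf : I ⊆ facets P) {F G : Set E3} (hF : F ∈ I)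
    (hG : G ∈ facets P) (hGI : G ∉ I)
    {x y : E3} (hx : x ∈ intrinsicInterior ℝ F) (hy : y ∈ intrinsicInterior ℝ G) :
    connectedComponentIn (frontier P \ gam P I) x ≠ connectedComponentIn (frontier P \ gam P I) y := by
  intro heq
  have hxA := h.relint_sub hIf (hIf hF) hx
  have hyA := h.relint_sub hIf hG hy
  have hclosed : ∀ J ⊆ facets P, IsClosed (⋃ K ∈ J, K) := fun J hJ =>
    (h.fin.subset hJ).isClosed_biUnion fun K hK => (hJ hK).1.2.1
  have hpre := isPreconnected_closed_iff.1
    (isPreconnected_connectedComponentIn (x := x) (F := frontier P \ gam P I))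
    (⋃ K ∈ I, K) (⋃ K ∈ facets P \ I, K) (hclosed _ hIf) (hclosed _ sdiff_subset) ?_
    ⟨x, mem_connectedComponentIn hxA, mem_biUnion hF (intrinsicInterior_subset hx)⟩
    ⟨y, by rw [heq]; exact mem_connectedComponentIn hyA,
      mem_biUnion (⟨hG, hGI⟩ : G ∈ facets P \ I) (intrinsicInterior_subset hy)⟩
  · obtain ⟨z, hz, hz1, hz2⟩ := hpre
    simp only [mem_iUnion] at hz1 hz2
    obtain ⟨K, hK, hzK⟩ := hz1
    obtain ⟨K', hK', hzK'⟩ := hz2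
    exact (connectedComponentIn_subset _ _ hz).2 ⟨K, hK, K', hK'.1, hK'.2, hzK, hzK'⟩
  · intro z hz
    obtain ⟨K, hK, hzK⟩ := frontier_mem_facet h.pol (connectedComponentIn_subset _ _ hz).1
    by_cases hKI : K ∈ I
    · exact Or.inl (mem_biUnion hKI hzK)
    · exact Or.inr (mem_biUnion (⟨hK, hKI⟩ : K ∈ facets P \ I) hzK)

theorem relint_nonempty (_ : HR P f c) {F : Set E3} (hF : F ∈ facets P) : (intrinsicInterior ℝ F).Nonempty :=
  hF.1.1.intrinsicInterior hF.1.2.2.1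

end HR

theorem nxt_val {n : ℕ} (t : Fin n) : (nxt t).1 = if t.1 + 1 = n then 0 else t.1 + 1 := by
  have := t.2
  simp only [nxt]
  split_ifs with h
  · rw [h, Nat.mod_self]
  · exact Nat.mod_eq_of_lt (by omega)

theorem prv_nxt {n : ℕ} (t : Fin n) : prv (nxt t) = t := by
  have ht := t.2
  apply Fin.ext
  have h1 := nxt_val t
  show ((nxt t).1 + (n - 1)) % n = t.1
  rw [h1]
  split_ifs with h
  · rw [zero_add, Nat.mod_eq_of_lt (by omega)]; omega
  · rw [show t.1 + 1 + (n - 1) = t.1 + n by omega, Nat.add_mod_right, Nat.mod_eq_of_lt ht]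

theorem nxt_inj {n : ℕ} : Function.Injective (nxt (k := n)) :=
  Function.LeftInverse.injective prv_nxt

theorem nxt_prv {n : ℕ} (t : Fin n) : nxt (prv t) = t := by
  obtain ⟨s, rfl⟩ := (Finite.injective_iff_surjective.1 (nxt_inj (n := n))) t
  rw [prv_nxt]

/-- Induction along the cyclic order. -/
theorem nxt_ind {n : ℕ} {p : Fin n → Prop} (t : Fin n) (h0 : p t) (hs : ∀ s, p s → p (nxt s)) (s : Fin n) :
    p s := by
  have hn : 0 < n := t.pos
  have h1 : ∀ d : ℕ, p ⟨(t.1 + d) % n, Nat.mod_lt _ hn⟩ := by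
    intro d
    induction d with
    | zero => simpa [Nat.mod_eq_of_lt t.2] using h0
    | succ d ih =>
      have := hs _ ih
      convert this using 1
      simp [nxt, ← add_assoc]
  have h2 := h1 (s.1 + n - t.1)
  convert h2 using 1
  apply Fin.ext
  show s.1 = (t.1 + (s.1 + n - t.1)) % n
  rw [show t.1 + (s.1 + n - t.1) = s.1 + n by omega, Nat.add_mod_right, Nat.mod_eq_of_lt s.2]


open Classical in
theorem compress {α : Type*} {n k : ℕ} (A : Fin n → α) (hk : 2 ≤ k)
    (hc : (Finset.univ.filter (fun t : Fin n => A (nxt t) ≠ A t)).card = k) :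
    ∃ (B : Fin k → α) (φ : Fin n → Fin k), (∀ t, B (φ t) = A t) ∧
      (∀ t, φ (nxt t) = φ t ∨ φ (nxt t) = nxt (φ t)) ∧ Function.Surjective φ ∧
      (∀ t, φ (nxt t) ≠ φ t ↔ A (nxt t) ≠ A t) ∧
      ∀ j, ∃ t, A (nxt t) ≠ A t ∧ B j = A t ∧ B (nxt j) = A (nxt t) := by
  have hn : 0 < n := by
    rcases Nat.eq_zero_or_pos n with rfl | h
    · simp at hc; omega
    · exact h
  let D : ℕ → α := fun t => A ⟨t % n, Nat.mod_lt _ hn⟩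
  let p : ℕ → Prop := fun t => D (t + 1) ≠ D t
  have hDA : ∀ t : Fin n, D t.1 = A t := fun t => by
    show A _ = A t
    congr 1
    exact Fin.ext (Nat.mod_eq_of_lt t.2)
  have hDA1 : ∀ t : Fin n, D (t.1 + 1) = A (nxt t) := fun t => rfl
  have hp : ∀ t : Fin n, p t.1 ↔ A (nxt t) ≠ A t := fun t => by
    show D (t.1+1) ≠ D t.1 ↔ _
    rw [hDA, hDA1]
  have hper : ∀ t, D (n + t) = D t := fun t => by
    show A _ = A _
    congr 1
    exact Fin.ext (Nat.add_mod_left n t)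
  have hpper : ∀ t, p (n + t) ↔ p t := fun t => by
    show D (n + t + 1) ≠ D (n + t) ↔ D (t+1) ≠ D t
    rw [add_assoc, hper, hper]
  have hcount : Nat.count p n = k := by
    rw [← hc, Nat.count_eq_card_filter_range, Finset.card_filter, Finset.card_filter,
      ← Fin.sum_univ_eq_sum_range (fun t => if p t then 1 else 0) n]
    apply Finset.sum_congr rfl
    intro t _
    simp only [hp]
  have hcadd : ∀ t, Nat.count p (n + t) = k + Nat.count p t := fun t => by
    rw [Nat.count_add, hcount]
    simp only [hpper]
  have hinf : {t | p t}.Infinite := by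
    rw [Set.infinite_iff_exists_gt]
    intro a
    obtain ⟨s, hs⟩ : ∃ s, p s := by
      by_contra hno
      push Not at hno
      have : Nat.count p n = 0 := by
        rw [Nat.count_eq_card_filter_range]
        simp [hno]
      omega
    have : ∀ m, p (n * m + s) := by
      intro m
      induction m with
      | zero => simpa using hs
      | succ m ih => rw [show n * (m+1) + s = n + (n * m + s) by ring, hpper]; exact ih
    refine ⟨n * (a+1) + s, this _, ?_⟩
    nlinarith
  have hcn : ∀ j, Nat.count p (Nat.nth p j) = j := fun j => Nat.count_nth_of_infinite hinf j
  have hpn : ∀ j, p (Nat.nth p j) := fun j => Nat.nth_mem_of_infinite hinf j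
  have hDn : ∀ t, D (Nat.nth p (Nat.count p t)) = D t := by
    intro t
    have hle : t ≤ Nat.nth p (Nat.count p t) := Nat.le_nth_count hinf t
    have : ∀ m, t ≤ m → m ≤ Nat.nth p (Nat.count p t) → D m = D t := by
      intro m hm
      induction m, hm using Nat.le_induction with
      | base => exact fun _ => rfl
      | succ m hm ih =>
        intro hmm
        rw [← ih (by omega)]
        by_contra hpm
        have hpm : p m := hpm
        have h1 := Nat.nth_count hpm
        have h2 : Nat.nth p (Nat.count p m) < Nat.nth p (Nat.count p t) := by omega
        rw [Nat.nth_lt_nth hinf] at h2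
        have := Nat.count_monotone p hm
        omega
    exact this _ hle le_rfl
  have hBper : ∀ j, D (Nat.nth p (k + j)) = D (Nat.nth p j) := by
    intro j
    have := hDn (n + Nat.nth p j)
    rwa [hcadd, hcn, hper] at this
  have hBmod : ∀ j, D (Nat.nth p (j % k)) = D (Nat.nth p j) := by
    intro j
    have : ∀ m r, D (Nat.nth p (k * m + r)) = D (Nat.nth p r) := by
      intro m r
      induction m with
      | zero => simp
      | succ m ih => rw [show k * (m+1) + r = k + (k * m + r) by ring, hBper]; exact ih
    conv_rhs => rw [← Nat.div_add_mod j k]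
    rw [this]
  have hk0 : 0 < k := by omega
  let φ : Fin n → Fin k := fun t => ⟨Nat.count p t.1 % k, Nat.mod_lt _ hk0⟩
  have hφn : ∀ t : Fin n, (φ (nxt t)).1 = Nat.count p (t.1 + 1) % k := by
    intro t
    show Nat.count p (nxt t).1 % k = _
    rw [nxt_val]
    split_ifs with h
    · rw [h, hcount]; simp
    · rfl
  have hφy : ∀ t, p t.1 → φ (nxt t) = nxt (φ t) := by
    intro t ht
    apply Fin.ext
    rw [hφn, Nat.count_succ, if_pos ht]
    show _ = (Nat.count p t.1 % k + 1) % k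
    rw [Nat.mod_add_mod]
  have hφo : ∀ t, ¬ p t.1 → φ (nxt t) = φ t := by
    intro t ht
    apply Fin.ext
    rw [hφn, Nat.count_succ, if_neg ht]
    rfl
  have hnn : ∀ j : Fin k, nxt j ≠ j := by
    intro j hj
    have := congrArg Fin.val hj
    rw [nxt_val] at this
    split_ifs at this <;> omega
  refine ⟨fun j => D (Nat.nth p j.1), φ, ?_, ?_, ?_, ?_, ?_⟩
  · intro t
    show D (Nat.nth p (Nat.count p t.1 % k)) = A t
    rw [hBmod, hDn, hDA]
  · intro t
    by_cases ht : p t.1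
    · exact Or.inr (hφy t ht)
    · exact Or.inl (hφo t ht)
  · intro j
    have hlt : Nat.nth p j.1 < n := Nat.nth_lt_of_lt_count (by rw [hcount]; exact j.2)
    refine ⟨⟨Nat.nth p j.1, hlt⟩, Fin.ext ?_⟩
    show Nat.count p (Nat.nth p j.1) % k = j.1
    rw [hcn, Nat.mod_eq_of_lt j.2]
  · intro t
    rw [← hp]
    by_cases ht : p t.1
    · simp only [ht, iff_true]
      rw [hφy t ht]; exact hnn _
    · simp only [ht, iff_false, not_not]
      exact hφo t ht
  · intro j
    have hlt : Nat.nth p j.1 < n := Nat.nth_lt_of_lt_count (by rw [hcount]; exact j.2)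
    refine ⟨⟨Nat.nth p j.1, hlt⟩, (hp _).1 (hpn j.1), hDA ⟨Nat.nth p j.1, hlt⟩, ?_⟩
    rw [← hDA1]
    show D (Nat.nth p ((j.1 + 1) % k)) = D (Nat.nth p j.1 + 1)
    rw [hBmod, ← hDn (Nat.nth p j.1 + 1), Nat.count_succ, if_pos (hpn _), hcn]

/-- A list with a cyclic relation gives a cyclic sequence. -/
theorem list_cycle {α : Type*} {R : α → α → Prop} (l : List α) (hl : l.Nodup) (hc : l.IsChain R)
    (hne : l ≠ []) (hlast : R (l.getLast hne) (l.head hne)) :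
    ∃ e : Fin l.length → α, Function.Injective e ∧ (∀ x, x ∈ l ↔ ∃ t, e t = x) ∧ ∀ t, R (e t) (e (nxt t)) := by
  refine ⟨l.get, List.nodup_iff_injective_get.1 hl, fun x => List.mem_iff_get, ?_⟩
  intro t
  have hv := nxt_val t
  by_cases h : t.1 + 1 = l.length
  · rw [if_pos h] at hv
    have h1 : l.get t = l.getLast hne := by
      rw [List.getLast_eq_getElem]
      simp only [List.get_eq_getElem]
      congr 1
      omega
    have h2 : l.get (nxt t) = l.head hne := by
      rw [List.head_eq_getElem]
      simp only [List.get_eq_getElem]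
      congr 1
    rw [h1, h2]; exact hlast
  · rw [if_neg h] at hv
    have h3 := List.isChain_iff_getElem.1 hc t.1 (by omega)
    simp only [List.get_eq_getElem, hv]
    exact h3


/-- Four facets around the edge `L 0 ∩ L 2`. -/
structure Cfg (P : Set E3) (L : Fin 4 → Set E3) : Prop where
  inj : Function.Injective L
  t1 : Tri P (L 0) (L 1) (L 2)
  t3 : Tri P (L 0) (L 2) (L 3)
  dis : ¬ (L 1 ∩ L 3).Nonempty
  deg : ∀ i, 4 ≤ (nbr P (L i)).ncard

/-- Successive pairs (inner facet, outer facet) around the boundary of the configuration. -/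
def CRel (P : Set E3) (L : Fin 4 → Set E3) (a b : Fin 4 × Set E3) : Prop :=
  (a.1 = b.1 ∧ Tri P (L a.1) a.2 b.2) ∨ (b.1 = nxt a.1 ∧ a.2 = b.2 ∧ Tri P (L a.1) (L b.1) a.2)

theorem nxt4 : nxt (0 : Fin 4) = 1 ∧ nxt (1 : Fin 4) = 2 ∧ nxt (2 : Fin 4) = 3 ∧ nxt (3 : Fin 4) = 0 :=
  ⟨rfl, rfl, rfl, rfl⟩

theorem prv4 : prv (0 : Fin 4) = 3 ∧ prv (1 : Fin 4) = 0 ∧ prv (2 : Fin 4) = 1 ∧ prv (3 : Fin 4) = 2 :=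
  ⟨rfl, rfl, rfl, rfl⟩

namespace Cfg
variable {P : Set E3} {L : Fin 4 → Set E3}

theorem fac (g : Cfg P L) (i : Fin 4) : L i ∈ facets P := by
  fin_cases i
  · exact g.t1.1
  · exact g.t1.2.1
  · exact g.t1.2.2.1
  · exact g.t3.2.2.1

theorem range_sub (g : Cfg P L) : range L ⊆ facets P := by
  rintro _ ⟨i, rfl⟩; exact g.fac i

theorem inner (g : Cfg P L) (i : Fin 4) : ∃ j, Tri P (L i) (L (nxt i)) (L j) := by
  fin_cases i
  · exact ⟨2, g.t1⟩
  · exact ⟨0, g.t1.rot⟩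
  · exact ⟨0, g.t3.rot⟩
  · exact ⟨2, g.t3.rot.rot⟩

end Cfg

namespace HR
variable {P : Set E3} {f : Set E3 → E3 →L[ℝ] ℝ} {c : Set E3 → ℝ} {L : Fin 4 → Set E3}

theorem outer_unique (h : HR P f c) (g : Cfg P L) {i : Fin 4} {G H : Set E3}
    (tG : Tri P (L i) (L (nxt i)) G) (tH : Tri P (L i) (L (nxt i)) H) (hG : G ∉ range L) (hH : H ∉ range L) :
    G = H := by
  obtain ⟨j, tj⟩ := g.inner i
  have hj : L j ≠ G := by rintro rfl; exact hG ⟨j, rfl⟩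
  rcases h.tri_third tj tG hj tH with rfl | rfl
  · exact absurd ⟨j, rfl⟩ hH
  · rfl

theorem arc1 (h : HR P f c) {F B C : Set E3} (t : Tri P F B C) (hd : 4 ≤ (nbr P F).ncard) :
    ∃ A : List (Set E3), (B :: (A ++ [C])).Nodup ∧ (∀ X, X ∈ B :: (A ++ [C]) ↔ X ∈ nbr P F) ∧
      (B :: (A ++ [C])).IsChain (Tri P F) ∧ A.length + 2 = (nbr P F).ncard := by
  classical
  obtain ⟨l, hl, hmem, hh, hlast, hch⟩ := h.link_list t
  have hlen : l.length = (nbr P F).ncard := by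
    rw [← List.toFinset_card_of_nodup hl, ← Set.ncard_coe_finset]
    congr 1
    ext X
    simp [hmem]
  rcases l with _ | ⟨b, l⟩
  · simp at hh
  simp only [List.head?_cons, Option.some.injEq] at hh
  subst hh
  rcases List.eq_nil_or_concat l with rfl | ⟨A, c', rfl⟩
  · simp at hlen; omega
  have : c' = C := by
    rw [List.concat_eq_append, show b :: (A ++ [c']) = (b :: A) ++ [c'] from rfl, List.getLast?_concat] at hlast
    simpa using hlast
  subst this
  refine ⟨A, by simpa using hl, by simpa using hmem, by simpa using hch, ?_⟩
  rw [← hlen]; simp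

theorem arc2 (h : HR P f c) {F B C D : Set E3} (t : Tri P F B C) (t' : Tri P F B D) (hCD : C ≠ D)
    (hd : 4 ≤ (nbr P F).ncard) :
    ∃ A : List (Set E3), (B :: D :: (A ++ [C])).Nodup ∧ (∀ X, X ∈ B :: D :: (A ++ [C]) ↔ X ∈ nbr P F) ∧
      (B :: D :: (A ++ [C])).IsChain (Tri P F) ∧ A.length + 3 = (nbr P F).ncard := by
  obtain ⟨A, h1, h2, h3, h4⟩ := h.arc1 t hd
  rcases A with _ | ⟨X, A⟩
  · simp at h4; omega
  have hX : Tri P F B X := by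
    simp only [List.cons_append, List.isChain_cons_cons] at h3
    exact h3.1
  rcases h.tri_third t t' hCD hX with rfl | rfl
  · simp at h1
  · refine ⟨A, by simpa using h1, by simpa using h2, by simpa using h3, by simpa using h4⟩

/-- The arc of outer facets along the inner facet `L i`. -/
def _root_.Arc (P : Set E3) (L : Fin 4 → Set E3) (i : Fin 4) (A : List (Set E3)) : Prop :=
  A ≠ [] ∧ A.Nodup ∧ (∀ X, X ∈ A ↔ X ∈ nbr P (L i) ∧ X ∉ range L) ∧ A.IsChain (Tri P (L i)) ∧
    (∀ X ∈ A.head?, Tri P (L i) (L (prv i)) X) ∧ (∀ X ∈ A.getLast?, Tri P (L i) (L (nxt i)) X)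

theorem _root_.arc_of {P : Set E3} {L : Fin 4 → Set E3} {i : Fin 4} {A pre : List (Set E3)}
    (hne : A ≠ []) (hn : (pre ++ L (prv i) :: (A ++ [L (nxt i)])).Nodup)
    (hm : ∀ X, X ∈ pre ++ L (prv i) :: (A ++ [L (nxt i)]) ↔ X ∈ nbr P (L i))
    (hc : (pre ++ L (prv i) :: (A ++ [L (nxt i)])).IsChain (Tri P (L i)))
    (hpre : ∀ X ∈ pre, X ∈ range L)
    (hr : ∀ j, L j ∈ nbr P (L i) → L j ∈ pre ∨ j = prv i ∨ j = nxt i) : Arc P L i A := by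
  have hn' := hn
  rw [List.nodup_append] at hn
  obtain ⟨hn1, hn2, hn3⟩ := hn
  have hc2 := (List.isChain_append.1 hc).2.1
  rw [List.isChain_cons] at hc2
  obtain ⟨hc3, hc4⟩ := hc2
  rw [List.isChain_append] at hc4
  obtain ⟨hc5, -, hc6⟩ := hc4
  refine ⟨hne, ?_, ?_, hc5, ?_, ?_⟩
  · exact (List.nodup_append.1 (List.nodup_cons.1 hn2).2).1
  · intro X
    constructor
    · intro hX
      refine ⟨(hm X).1 (by simp [hX]), ?_⟩
      rintro ⟨j, rfl⟩
      have hj := hr j ((hm _).1 (by simp [hX]))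
      rcases hj with hj | rfl | rfl
      · exact hn3 _ hj _ (by simp [hX]) rfl
      · exact (List.nodup_cons.1 hn2).1 (by simp [hX])
      · exact (List.nodup_append.1 (List.nodup_cons.1 hn2).2).2.2 _ hX _ (by simp) rfl
    · rintro ⟨hX, hXr⟩
      have := (hm X).2 hX
      simp only [List.mem_append, List.mem_cons, List.not_mem_nil, or_false] at this
      rcases this with h1 | h1 | h1 | h1
      · exact absurd (hpre X h1) hXr
      · exact absurd ⟨_, h1.symm⟩ hXr
      · exact h1
      · exact absurd ⟨_, h1.symm⟩ hXr
  · intro X hX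
    apply hc3
    rcases A with _ | ⟨a, A⟩
    · exact absurd rfl hne
    · simpa using hX
  · intro X hX
    exact (hc6 X hX _ (by simp)).swap

theorem arcs (h : HR P f c) (g : Cfg P L) : ∃ A : Fin 4 → List (Set E3), (∀ i, Arc P L i (A i)) ∧
    (A 0).length + 3 = (nbr P (L 0)).ncard ∧ (A 1).length + 2 = (nbr P (L 1)).ncard ∧
    (A 2).length + 3 = (nbr P (L 2)).ncard ∧ (A 3).length + 2 = (nbr P (L 3)).ncard := by
  obtain ⟨n0, n1, n2, n3⟩ := nxt4
  obtain ⟨p0, p1, p2, p3⟩ := prv4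
  have h13 : L 1 ≠ L 3 := fun hh => by simpa using g.inj hh
  obtain ⟨A0, a1, a2, a3, a4⟩ := h.arc2 g.t1.swap g.t3 h13 (g.deg 0)
  obtain ⟨A1, b1, b2, b3, b4⟩ := h.arc1 g.t1.swap' (g.deg 1)
  obtain ⟨A2, c1, c2, c3, c4⟩ := h.arc2 g.t3.swap' g.t1.rot.rot h13.symm (g.deg 2)
  obtain ⟨A3, d1, d2, d3, d4⟩ := h.arc1 g.t3.rot.rot.swap (g.deg 3)
  have e0 := g.deg 0
  have e1 := g.deg 1
  have e2 := g.deg 2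
  have e3 := g.deg 3
  have hne : ∀ A : List (Set E3), 1 ≤ A.length → A ≠ [] := by
    rintro A hA rfl; simp at hA
  have hself : ∀ i, L i ∉ nbr P (L i) := fun i hi => hi.2.1 rfl
  refine ⟨![A0, A1, A2, A3], ?_, a4, b4, c4, d4⟩
  intro i
  fin_cases i
  · refine arc_of (pre := [L 2]) (hne _ (by show 1 ≤ A0.length; omega)) a1 a2 a3 (by simp) ?_
    intro j hj
    fin_cases j
    · exact absurd hj (hself 0)
    · right; right; rfl
    · left; simp
    · right; left; rfl
  · refine arc_of (pre := []) (hne _ (by show 1 ≤ A1.length; omega)) b1 b2 b3 (by simp) ?_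
    intro j hj
    fin_cases j
    · right; left; rfl
    · exact absurd hj (hself 1)
    · right; right; rfl
    · exact absurd hj.2.2 g.dis
  · refine arc_of (pre := [L 0]) (hne _ (by show 1 ≤ A2.length; omega)) c1 c2 c3 (by simp) ?_
    intro j hj
    fin_cases j
    · left; simp
    · right; left; rfl
    · exact absurd hj (hself 2)
    · right; right; rfl
  · refine arc_of (pre := []) (hne _ (by show 1 ≤ A3.length; omega)) d1 d2 d3 (by simp) ?_
    intro j hj
    fin_cases j
    · right; right; rfl
    · exact absurd (by rw [inter_comm]; exact hj.2.2) g.dis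
    · right; left; rfl
    · exact absurd hj (hself 3)

theorem cyc (h : HR P f c) (g : Cfg P L) : ∃ (n : ℕ) (e : Fin n → Fin 4 × Set E3),
    n + 10 = (nbr P (L 0)).ncard + (nbr P (L 1)).ncard + (nbr P (L 2)).ncard + (nbr P (L 3)).ncard ∧
    Function.Injective e ∧ (∀ i G, (∃ t, e t = (i, G)) ↔ G ∈ nbr P (L i) ∧ G ∉ range L) ∧
    (∀ t, CRel P L (e t) (e (nxt t))) ∧ ∀ i, ∃ t, (e t).1 = i := by
  obtain ⟨A, hA, l0, l1, l2, l3⟩ := h.arcs g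
  have hlast : ∀ i, ∃ X, (A i).getLast? = some X := fun i =>
    ⟨_, List.getLast?_eq_getLast_of_ne_nil (hA i).1⟩
  choose b hb using hlast
  have hhead : ∀ i, (A (nxt i)).head? = some (b i) := by
    intro i
    obtain ⟨X, hX⟩ : ∃ X, (A (nxt i)).head? = some X := ⟨_, List.head?_eq_some_head (hA (nxt i)).1⟩
    rw [hX]
    have t1 := (hA (nxt i)).2.2.2.2.1 X hX
    rw [prv_nxt] at t1
    have t2 := (hA i).2.2.2.2.2 (b i) (hb i)
    have m1 := ((hA (nxt i)).2.2.1 X).1 (List.mem_of_mem_head? hX)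
    have m2 := ((hA i).2.2.1 (b i)).1 (List.mem_of_mem_getLast? (hb i))
    rw [h.outer_unique g t1.swap' t2 m1.2 m2.2]
  let M : Fin 4 → List (Fin 4 × Set E3) := fun i => (A i).map (Prod.mk i)
  have hMl : ∀ i, (M i).getLast? = some (i, b i) := fun i => by simp [M, hb i]
  have hMh : ∀ i, (M (nxt i)).head? = some (nxt i, b i) := fun i => by simp [M, hhead i]
  have hMc : ∀ i, (M i).IsChain (CRel P L) := by
    intro i
    simp only [M, List.isChain_map]
    exact (hA i).2.2.2.1.imp fun X Y hXY => Or.inl ⟨rfl, hXY⟩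
  have hJ : ∀ i, CRel P L (i, b i) (nxt i, b i) := fun i =>
    Or.inr ⟨rfl, rfl, (hA i).2.2.2.2.2 _ (hb i)⟩
  have hMn : ∀ i, (M i).Nodup := fun i => (hA i).2.1.map (Prod.mk_right_injective i)
  have hmM : ∀ i x, x ∈ M i → x.1 = i := by
    intro i x hx
    simp only [M, List.mem_map] at hx
    obtain ⟨_, _, rfl⟩ := hx
    rfl
  have h0 := hMh 3
  have h1 := hMh 0
  have h2 := hMh 1
  have h3 := hMh 2
  obtain ⟨n0, n1, n2, n3⟩ := nxt4
  have J0 := hJ 0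
  have J1 := hJ 1
  have J2 := hJ 2
  have J3 := hJ 3
  rw [n0] at h1 J0
  rw [n1] at h2 J1
  rw [n2] at h3 J2
  rw [n3] at h0 J3
  let l := M 0 ++ (M 1 ++ (M 2 ++ M 3))
  have hlh : l.head? = some (0, b 3) := by simp [l, h0]
  have hll : l.getLast? = some (3, b 3) := by simp [l, hMl]
  have hne : l ≠ [] := by intro hh; rw [hh] at hlh; simp at hlh
  have hchain : l.IsChain (CRel P L) := by
    simp only [l]
    rw [List.isChain_append, List.isChain_append, List.isChain_append]
    refine ⟨hMc 0, ⟨hMc 1, ⟨hMc 2, hMc 3, ?_⟩, ?_⟩, ?_⟩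
    · simp [hMl, h3, J2]
    · simp [hMl, h2, J1]
    · simp [hMl, h1, J0]
  have hnd : l.Nodup := by
    simp only [l]
    have hd : ∀ i j x y, i ≠ j → x ∈ M i → y ∈ M j → x ≠ y := by
      rintro i j x y hij hx hy rfl
      exact hij ((hmM i x hx).symm.trans (hmM j x hy))
    simp only [List.nodup_append, List.mem_append]
    refine ⟨hMn 0, ⟨hMn 1, ⟨hMn 2, hMn 3, ?_⟩, ?_⟩, ?_⟩
    · exact fun x hx y hy => hd 2 3 x y (by decide) hx hy
    · rintro x hx y (hy | hy)
      · exact hd 1 2 x y (by decide) hx hy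
      · exact hd 1 3 x y (by decide) hx hy
    · rintro x hx y (hy | hy | hy)
      · exact hd 0 1 x y (by decide) hx hy
      · exact hd 0 2 x y (by decide) hx hy
      · exact hd 0 3 x y (by decide) hx hy
  have hmem : ∀ i G, (i, G) ∈ l ↔ G ∈ A i := by
    intro i G
    have : (i, G) ∈ l ↔ ∃ j, (i, G) ∈ M j := by
      simp only [l, List.mem_append]
      constructor
      · rintro (hh | hh | hh | hh) <;> exact ⟨_, hh⟩
      · rintro ⟨j, hj⟩
        fin_cases j
        · exact Or.inl hj
        · exact Or.inr (Or.inl hj)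
        · exact Or.inr (Or.inr (Or.inl hj))
        · exact Or.inr (Or.inr (Or.inr hj))
    rw [this]
    simp [M]
  obtain ⟨e, e1, e2, e3⟩ := list_cycle (R := CRel P L) l hnd hchain hne (by
    have a1 : l.getLast hne = (3, b 3) := by
      rw [List.getLast?_eq_getLast_of_ne_nil hne] at hll; simpa using hll
    have a2 : l.head hne = (0, b 3) := by
      rw [List.head?_eq_some_head hne] at hlh; simpa using hlh
    rw [a1, a2]; exact J3)
  refine ⟨l.length, e, ?_, e1, ?_, e3, fun i => ?_⟩
  · simp only [l, M, List.length_append, List.length_map]; omega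
  · intro i G
    rw [← e2, hmem, (hA i).2.2.1]
  · obtain ⟨t, ht⟩ := (e2 (i, b i)).1 ((hmem _ _).2 (List.mem_of_mem_getLast? (hb i)))
    exact ⟨t, by rw [ht]⟩

end HR


namespace HR
variable {P : Set E3} {f : Set E3 → E3 →L[ℝ] ℝ} {c : Set E3 → ℝ} {L : Fin 4 → Set E3}

theorem rel_pt (h : HR P f c) (g : Cfg P L) {a b : Fin 4 × Set E3} (hr : CRel P L a b)
    (ha : a.2 ∉ range L) (hb : b.2 ∉ range L) :
    ∃ x, IsVertexOf x P ∧ (x ∈ L a.1 ∧ x ∈ a.2) ∧ (x ∈ L b.1 ∧ x ∈ b.2) ∧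
      ∀ i G, x ∈ L i → G ∈ facets P → G ∉ range L → x ∈ G → (i, G) = a ∨ (i, G) = b := by
  obtain ⟨i, G⟩ := a
  obtain ⟨j, H⟩ := b
  simp only at ha hb
  rcases hr with ⟨hij, t⟩ | ⟨hij, hGH, t⟩
  · simp only at hij t
    subst hij
    obtain ⟨k1, k2, k3, k4, k5, k6, x, x1, x2, x3⟩ := t
    obtain ⟨hx, hxa⟩ := h.triple k1 k2 k3 k4 k5 k6 x1 x2 x3
    refine ⟨x, hx, ⟨x1, x2⟩, ⟨x1, x3⟩, ?_⟩
    intro i' G' hi' hG' hG'r hxG'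
    have m1 : L i' ∈ act P x := ⟨g.fac i', hi'⟩
    have m2 : G' ∈ act P x := ⟨hG', hxG'⟩
    rw [hxa] at m1 m2
    simp only [mem_insert_iff, mem_singleton_iff] at m1 m2
    have e1 : i' = i := by
      rcases m1 with m1 | m1 | m1
      · exact g.inj m1
      · exact absurd ⟨i', m1⟩ ha
      · exact absurd ⟨i', m1⟩ hb
    subst e1
    rcases m2 with rfl | rfl | rfl
    · exact absurd ⟨_, rfl⟩ hG'r
    · exact Or.inl rfl
    · exact Or.inr rfl
  · simp only at hij hGH t
    subst hij hGH
    obtain ⟨k1, k2, k3, k4, k5, k6, x, x1, x2, x3⟩ := t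
    obtain ⟨hx, hxa⟩ := h.triple k1 k2 k3 k4 k5 k6 x1 x2 x3
    refine ⟨x, hx, ⟨x1, x3⟩, ⟨x2, x3⟩, ?_⟩
    intro i' G' hi' hG' hG'r hxG'
    have m1 : L i' ∈ act P x := ⟨g.fac i', hi'⟩
    have m2 : G' ∈ act P x := ⟨hG', hxG'⟩
    rw [hxa] at m1 m2
    simp only [mem_insert_iff, mem_singleton_iff] at m1 m2
    have e2 : G' = G := by
      rcases m2 with rfl | rfl | rfl
      · exact absurd ⟨_, rfl⟩ hG'r
      · exact absurd ⟨_, rfl⟩ hG'r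
      · rfl
    subst e2
    rcases m1 with m1 | m1 | m1
    · left; rw [g.inj m1]
    · right; rw [g.inj m1]
    · exact absurd ⟨i', m1⟩ ha

theorem seg_eq (h : HR P f c) {F G : Set E3} (hF : F ∈ facets P) (hG : G ∈ nbr P F) {v w : E3}
    (hv : IsVertexOf v P) (hw : IsVertexOf w P) (hvw : v ≠ w) (v1 : v ∈ F) (v2 : v ∈ G) (w1 : w ∈ F)
    (w2 : w ∈ G) : segment ℝ v w = F ∩ G := by
  obtain ⟨a, b, H, H', hab, hseg, ha, hb, haa, hba, t1, t2, hHH, hall⟩ := h.edge_full hF hG.1 hG.2.1 hG.2.2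
  rw [hseg]
  rcases hall v hv v1 v2 with rfl | rfl <;> rcases hall w hw w1 w2 with rfl | rfl
  · exact absurd rfl hvw
  · rfl
  · exact segment_symm ℝ _ _
  · exact absurd rfl hvw

theorem core (h : HR P f c) (g : Cfg P L) (hL : IsLoop P L) : ∃ k,
    k + 14 = (nbr P (L 0)).ncard + (nbr P (L 1)).ncard + (nbr P (L 2)).ncard + (nbr P (L 3)).ncard ∧
    2 ≤ k ∧ ∃ L' : Fin k → Set E3, Borders P L L' := by
  classical
  obtain ⟨n, e, hn, einj, ecov, erel, esurj⟩ := h.cyc g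
  have d0 := g.deg 0
  have d1 := g.deg 1
  have d2 := g.deg 2
  have d3 := g.deg 3
  have hnn4 : ∀ j : Fin 4, nxt j ≠ j := by decide
  have hout : ∀ t, (e t).2 ∈ nbr P (L (e t).1) ∧ (e t).2 ∉ range L := fun t => (ecov _ _).1 ⟨t, rfl⟩
  -- the changes
  have hch : ∀ t, (e (nxt t)).2 ≠ (e t).2 ↔ ¬ (e (nxt t)).1 ≠ (e t).1 := by
    intro t
    rcases erel t with ⟨h1, h2⟩ | ⟨h1, h2, h3⟩
    · have := h2.2.2.2.2.2.1
      simp [h1, this.symm]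
    · have := hnn4 (e t).1
      simp [h1, h2, this]
  have hchi : ∀ t, (e (nxt t)).1 = (e t).1 ∨ (e (nxt t)).1 = nxt (e t).1 := by
    intro t
    rcases erel t with ⟨h1, h2⟩ | ⟨h1, h2, h3⟩
    · exact Or.inl h1.symm
    · exact Or.inr h1
  have hcard1 : (Finset.univ.filter (fun t : Fin n => (e (nxt t)).1 ≠ (e t).1)).card = 4 := by
    have h4 : (Finset.univ : Finset (Fin 4)).card = 4 := by simp
    refine Eq.trans ?_ h4
    apply Finset.card_bij (fun t _ => (e t).1)
    · intro t _; exact Finset.mem_univ _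
    · intro s hs t ht hst
      rw [Finset.mem_filter] at hs ht
      have key : ∀ t, (e (nxt t)).1 ≠ (e t).1 → Tri P (L (e t).1) (L (nxt (e t).1)) (e t).2 := by
        intro t ht
        rcases erel t with ⟨h1, h2⟩ | ⟨h1, h2, h3⟩
        · exact absurd h1.symm ht
        · rw [h1] at h3; exact h3
      have k1 := key s hs.2
      have k2 := key t ht.2
      rw [hst] at k1
      have := h.outer_unique g k1 k2 (hout s).2 (hout t).2
      exact einj (Prod.ext hst this)
    · intro i _
      by_contra hno
      push Not at hno
      obtain ⟨t0, ht0⟩ := esurj i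
      obtain ⟨t1, ht1⟩ := esurj (nxt i)
      have := nxt_ind (p := fun t => (e t).1 = i) t0 ht0 (by
        intro s hs
        by_contra hne
        exact hno s (by simp [hs, hne]) hs) t1
      exact hnn4 i (ht1.symm.trans this)
  have hcard2 : (Finset.univ.filter (fun t : Fin n => (e (nxt t)).2 ≠ (e t).2)).card = n - 4 := by
    have h1 := Finset.card_filter_add_card_filter_not (s := (Finset.univ : Finset (Fin n)))
      (fun t : Fin n => (e (nxt t)).1 ≠ (e t).1)
    rw [hcard1, Finset.card_univ, Fintype.card_fin] at h1
    have h2 : (Finset.univ.filter (fun t : Fin n => (e (nxt t)).2 ≠ (e t).2)) =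
        Finset.univ.filter (fun t : Fin n => ¬ (e (nxt t)).1 ≠ (e t).1) := by
      apply Finset.filter_congr
      intro t _
      exact hch t
    rw [h2]; omega
  -- the cycle
  choose q qv q1 q2 q3 using fun t => h.rel_pt g (erel t) (hout t).2 (hout (nxt t)).2
  have qinj : Function.Injective q := by
    intro s t hst
    have a1 := q3 t _ _ (hst ▸ (q1 s).1) (hout s).1.1 (hout s).2 (hst ▸ (q1 s).2)
    have a2 := q3 t _ _ (hst ▸ (q2 s).1) (hout (nxt s)).1.1 (hout (nxt s)).2 (hst ▸ (q2 s).2)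
    rcases a1 with a1 | a1
    · exact einj a1
    · rcases a2 with a2 | a2
      · have b1 : s = nxt t := einj a1
        have b2 : nxt s = t := einj a2
        rw [b1] at b2
        have b3 := congrArg Fin.val b2
        rw [nxt_val, nxt_val] at b3
        have := t.2
        split_ifs at b3 <;> omega
      · exact nxt_inj (einj a2)
  have hnself : ∀ t : Fin n, nxt t ≠ t := by
    intro j hj
    have := congrArg Fin.val hj
    rw [nxt_val] at this
    split_ifs at this <;> omega
  let v : Fin n → E3 := fun t => q (prv t)
  have hvn : ∀ t, v (nxt t) = q t := fun t => by simp only [v, prv_nxt]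
  have hvt : ∀ t, v t ∈ L (e t).1 ∧ v t ∈ (e t).2 := fun t => by
    have := q2 (prv t)
    rwa [nxt_prv] at this
  have vinj : Function.Injective v := by
    intro s t hst
    have := qinj hst
    rw [← nxt_prv s, ← nxt_prv t, this]
  have hseg : ∀ t, segment ℝ (v t) (v (nxt t)) = L (e t).1 ∩ (e t).2 := by
    intro t
    have hne : v t ≠ v (nxt t) := fun hh => hnself t (vinj hh).symm
    refine h.seg_eq (g.fac _) (hout t).1 (qv _) (qv _) hne (hvt t).1 (hvt t).2 ?_ ?_
    · rw [hvn]; exact (q1 t).1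
    · rw [hvn]; exact (q1 t).2
  have hγ : gam P (range L) = ⋃ t, segment ℝ (v t) (v (nxt t)) := by
    ext x
    simp only [mem_iUnion, hseg]
    constructor
    · rintro ⟨_, ⟨i, rfl⟩, G, hG, hGr, x1, x2⟩
      obtain ⟨t, ht⟩ := (ecov i G).2 ⟨⟨hG, fun hh => hGr ⟨i, hh⟩, x, x1, x2⟩, hGr⟩
      exact ⟨t, by rw [ht]; exact ⟨x1, x2⟩⟩
    · rintro ⟨t, x1, x2⟩
      exact ⟨_, ⟨_, rfl⟩, _, (hout t).1.1, (hout t).2, x1, x2⟩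
  have hcyc : IsSimpleEdgeCycleVia P (gam P (range L)) v := by
    refine ⟨by omega, vinj, fun i => qv _, ?_, hγ⟩
    intro t
    rw [hseg]
    exact h.isEdge (g.fac _) (hout t).1.1 (hout t).1.2.1 (hout t).1.2.2
  -- the outer loop
  have hk : 2 ≤ n - 4 := by omega
  obtain ⟨L', ψ, p1, p2, p3, p4, p5⟩ := compress (fun t => (e t).2) hk hcard2
  refine ⟨n - 4, by omega, hk, L', ?_⟩
  have hL'o : ∀ j, L' j ∈ facets P ∧ L' j ∉ range L := by
    intro j
    obtain ⟨t, rfl⟩ := p3 j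
    rw [p1]
    exact ⟨(hout t).1.1, (hout t).2⟩
  have hL'e : ∀ j, L' j ≠ L' (nxt j) ∧ (L' j ∩ L' (nxt j)).Nonempty := by
    intro j
    obtain ⟨t, ht, h1, h2⟩ := p5 j
    rw [h1, h2]
    rcases erel t with ⟨h3, h4⟩ | ⟨h3, h4, h5⟩
    · exact h4.rot.nbr.2
    · exact absurd h4.symm ht
  have hL' : IsLoop P L' := ⟨by omega, fun j => (hL'o j).1, fun _ j =>
    h.isEdge (hL'o j).1 (hL'o _).1 (hL'e j).1 (hL'e j).2⟩
  have hI := g.range_sub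
  have hLn : ∀ i, (L i ∩ L (nxt i)).Nonempty := fun i => by
    obtain ⟨j, tj⟩ := g.inner i
    exact tj.nbr.2.2
  obtain ⟨x, hx⟩ := h.relint_nonempty (g.fac 0)
  let j0 : Fin (n - 4) := ⟨0, by omega⟩
  obtain ⟨y, hy⟩ := h.relint_nonempty (hL'o j0).1
  have hC1 : ∀ i, ∀ z ∈ intrinsicInterior ℝ (L i), connectedComponentIn (frontier P \ gam P (range L)) x =
      connectedComponentIn (frontier P \ gam P (range L)) z := by
    intro i
    refine nxt_ind (p := fun i => ∀ z ∈ intrinsicInterior ℝ (L i), connectedComponentIn (frontier P \ gam P (range L)) x =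
      connectedComponentIn (frontier P \ gam P (range L)) z) 0 ?_ ?_ i
    · intro z hz
      exact h.same_comp hI (g.fac 0) hx hz
    · intro i hi z hz
      obtain ⟨w, hw⟩ := h.relint_nonempty (g.fac i)
      rw [hi w hw]
      exact h.adj_comp hI (g.fac i) (g.fac _) (hLn i) (iff_of_true ⟨_, rfl⟩ ⟨_, rfl⟩) hw hz
  have hC2 : ∀ i, ∀ z ∈ intrinsicInterior ℝ (L' i), connectedComponentIn (frontier P \ gam P (range L)) y =
      connectedComponentIn (frontier P \ gam P (range L)) z := by
    intro i
    refine nxt_ind (p := fun i => ∀ z ∈ intrinsicInterior ℝ (L' i), connectedComponentIn (frontier P \ gam P (range L)) y =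
      connectedComponentIn (frontier P \ gam P (range L)) z) j0 ?_ ?_ i
    · intro z hz
      exact h.same_comp hI (hL'o j0).1 hy hz
    · intro i hi z hz
      obtain ⟨w, hw⟩ := h.relint_nonempty (hL'o i).1
      rw [hi w hw]
      exact h.adj_comp hI (hL'o i).1 (hL'o _).1 (hL'e i).2 (iff_of_false (hL'o i).2 (hL'o _).2) hw hz
  refine ⟨gam P (range L), _, _, ⟨x, h.relint_sub hI (g.fac 0) hx, rfl⟩,
    ⟨y, h.relint_sub hI (hL'o j0).1 hy, rfl⟩, h.diff_comp hI ⟨0, rfl⟩ (hL'o j0).1 (hL'o j0).2 hx hy, ?_, ?_⟩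
  · refine ⟨hL, ?_, n, v, fun t => (e t).1, hcyc, ?_, hchi, esurj, fun _ => ?_⟩
    · intro i z hz
      rw [hC1 i z hz]
      exact mem_connectedComponentIn (h.relint_sub hI (g.fac i) hz)
    · intro t; rw [hseg]; exact inter_subset_left
    · convert hcard1
  · refine ⟨hL', ?_, n, v, ψ, hcyc, ?_, p2, p3, fun _ => ?_⟩
    · intro i z hz
      rw [hC2 i z hz]
      exact mem_connectedComponentIn (h.relint_sub hI (hL'o i).1 hz)
    · intro t; rw [hseg, p1]; exact inter_subset_right
    · refine Eq.trans ?_ hcard2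
      congr 1
      apply Finset.filter_congr
      intro t _
      exact p4 t

theorem mkCfg (h : HR P f c) (hb : ∀ B : Fin 3 → Set E3, ¬ IsBelt P B) (h4 : (facets P).ncard ≠ 4)
    (hL : IsSimpleLoop P L) (h02 : (L 0 ∩ L 2).Nonempty) : Cfg P L := by
  obtain ⟨⟨-, hf, he⟩, inj⟩ := hL
  have he := he (by norm_num)
  have hne : ∀ i j, i ≠ j → L i ≠ L j := fun i j hij hh => hij (inj hh)
  have e01 : (L 0 ∩ L 1).Nonempty := (he 0).1.1
  have e12 : (L 1 ∩ L 2).Nonempty := (he 1).1.1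
  have e23 : (L 2 ∩ L 3).Nonempty := (he 2).1.1
  have e30 : (L 3 ∩ L 0).Nonempty := (he 3).1.1
  have e03 : (L 0 ∩ L 3).Nonempty := by rwa [inter_comm]
  have t1 : Tri P (L 0) (L 1) (L 2) := h.flag_tri hb (hf 0) (hf 1) (hf 2) (hne _ _ (by decide))
    (hne _ _ (by decide)) (hne _ _ (by decide)) e01 h02 e12
  have t3 : Tri P (L 0) (L 2) (L 3) := h.flag_tri hb (hf 0) (hf 2) (hf 3) (hne _ _ (by decide))
    (hne _ _ (by decide)) (hne _ _ (by decide)) h02 e03 e23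
  refine ⟨inj, t1, t3, ?_, ?_⟩
  · intro e13
    refine h.no_K4 hb h4 (range L) ?_ ?_ ?_
    · rintro _ ⟨i, rfl⟩; exact hf i
    · rw [← Set.image_univ, Set.ncard_image_of_injective _ inj]; simp
    · rintro _ ⟨i, rfl⟩ _ ⟨j, rfl⟩ hij
      fin_cases i <;> fin_cases j <;>
        first
        | exact absurd rfl hij
        | assumption
        | (rw [inter_comm]; assumption)
  · intro i
    have hi : nxt i ≠ i := by revert i; decide
    exact h.deg_ge hb h4 (hf i) (G := L (nxt i)) ⟨hf _, hne _ _ hi.symm, (he i).1.1⟩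

theorem first_part (h : HR P f c) (g : Cfg P L) : IsEdgeOf (L 0 ∩ L 2) P ∧ ∃ v w : E3, v ≠ w ∧ IsVertexOf v P ∧
    IsVertexOf w P ∧ v ∈ L 0 ∩ L 2 ∧ w ∈ L 0 ∩ L 2 ∧ v ∈ L 1 ∧ w ∈ L 3 := by
  obtain ⟨a1, a2, a3, a4, a5, a6, x, x1, x2, x3⟩ := g.t1
  obtain ⟨b1, b2, b3, b4, b5, b6, y, y1, y2, y3⟩ := g.t3
  refine ⟨h.isEdge a1 a3 a5 ⟨x, x1, x3⟩, x, y, ?_, (h.triple a1 a2 a3 a4 a5 a6 x1 x2 x3).1,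
    (h.triple b1 b2 b3 b4 b5 b6 y1 y2 y3).1, ⟨x1, x3⟩, ⟨y1, y2⟩, x2, y3⟩
  rintro rfl
  exact g.dis ⟨x, x2, y3⟩

end HR

theorem walks_rot {P γ C : Set E3} {L : Fin 4 → Set E3} (hL : IsLoop P L)
    (hw : WalksRound P γ C (fun i => L (nxt i))) : WalksRound P γ C L := by
  obtain ⟨-, hC, n, v, φ, h1, h2, h3, h4, h5⟩ := hw
  refine ⟨hL, fun i => ?_, n, v, fun t => nxt (φ t), h1, h2, ?_, ?_, fun hk => ?_⟩
  · have := hC (prv i)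
    simpa only [nxt_prv] using this
  · intro i
    rcases h3 i with h | h
    · left; exact congrArg nxt h
    · right; exact congrArg nxt h
  · intro i
    obtain ⟨t, ht⟩ := h4 (prv i)
    exact ⟨t, (congrArg nxt ht).trans (nxt_prv i)⟩
  · refine Eq.trans ?_ (h5 hk)
    congr 1
    apply Finset.filter_congr
    intro t _
    exact not_congr nxt_inj.eq_iff

/-- If a simple 4-loop in a flag 3-polytope is not a 4-belt, then it consists of the
four facets surrounding an edge (two opposite facets of the loop meet along an edge
whose endpoints lie on the two other facets), and it borders a `k`-loop with
`k = sᵢ + sⱼ + sₖ + sₗ - 14 ≥ 2`. -/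
theorem four_loop_lemma (P : Set E3) (hP : IsFlag3Polytope P)
    (L : Fin 4 → Set E3) (hL : IsSimpleLoop P L) (hnb : ¬ IsBelt P L) :
    ((IsEdgeOf (L 0 ∩ L 2) P ∧ ∃ v w : E3, v ≠ w ∧ IsVertexOf v P ∧ IsVertexOf w P ∧
        v ∈ L 0 ∩ L 2 ∧ w ∈ L 0 ∩ L 2 ∧ v ∈ L 1 ∧ w ∈ L 3) ∨
     (IsEdgeOf (L 1 ∩ L 3) P ∧ ∃ v w : E3, v ≠ w ∧ IsVertexOf v P ∧ IsVertexOf w P ∧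
        v ∈ L 1 ∩ L 3 ∧ w ∈ L 1 ∩ L 3 ∧ v ∈ L 0 ∧ w ∈ L 2)) ∧
    2 ≤ facetEdges P (L 0) + facetEdges P (L 1) + facetEdges P (L 2) +
        facetEdges P (L 3) - 14 ∧
    ∃ L' : Fin (facetEdges P (L 0) + facetEdges P (L 1) + facetEdges P (L 2) +
        facetEdges P (L 3) - 14) → Set E3, Borders P L L' := by
  obtain ⟨hS, h4, hb⟩ := hP
  obtain ⟨f, c, h⟩ := exists_HR hS
  have hf : ∀ i, L i ∈ facets P := hL.1.2.1
  have he := hL.1.2.2 (by norm_num)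
  have hopp : (L 0 ∩ L 2).Nonempty ∨ (L 1 ∩ L 3).Nonempty := by
    by_contra hno
    push Not at hno
    obtain ⟨n02, n13⟩ := hno
    apply hnb
    have e01 : (L 0 ∩ L 1).Nonempty := (he 0).1.1
    have e12 : (L 1 ∩ L 2).Nonempty := (he 1).1.1
    have e23 : (L 2 ∩ L 3).Nonempty := (he 2).1.1
    have e30 : (L 3 ∩ L 0).Nonempty := (he 3).1.1
    have e10 : (L 1 ∩ L 0).Nonempty := by rwa [inter_comm]
    have e21 : (L 2 ∩ L 1).Nonempty := by rwa [inter_comm]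
    have e32 : (L 3 ∩ L 2).Nonempty := by rwa [inter_comm]
    have e03 : (L 0 ∩ L 3).Nonempty := by rwa [inter_comm]
    have m02 : ¬ (L 0 ∩ L 2).Nonempty := by rw [n02]; simp
    have m13 : ¬ (L 1 ∩ L 3).Nonempty := by rw [n13]; simp
    have m20 : ¬ (L 2 ∩ L 0).Nonempty := by rwa [inter_comm]
    have m31 : ¬ (L 3 ∩ L 1).Nonempty := by rwa [inter_comm]
    refine ⟨by norm_num, hL.1, by omega, fun _ p q hpq => ?_⟩
    fin_cases p <;> fin_cases q <;>
      first
      | exact absurd rfl hpq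
      | exact iff_of_true (by assumption) (by decide)
      | exact iff_of_false (by assumption) (by decide)
  have hE : ∀ i, facetEdges P (L i) = (nbr P (L i)).ncard := fun i => h.facetEdges_eq (hf i)
  suffices hmain : ((IsEdgeOf (L 0 ∩ L 2) P ∧ ∃ v w : E3, v ≠ w ∧ IsVertexOf v P ∧ IsVertexOf w P ∧
        v ∈ L 0 ∩ L 2 ∧ w ∈ L 0 ∩ L 2 ∧ v ∈ L 1 ∧ w ∈ L 3) ∨
     (IsEdgeOf (L 1 ∩ L 3) P ∧ ∃ v w : E3, v ≠ w ∧ IsVertexOf v P ∧ IsVertexOf w P ∧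
        v ∈ L 1 ∩ L 3 ∧ w ∈ L 1 ∩ L 3 ∧ v ∈ L 0 ∧ w ∈ L 2)) ∧
      ∃ k, k + 14 = facetEdges P (L 0) + facetEdges P (L 1) + facetEdges P (L 2) +
        facetEdges P (L 3) ∧ 2 ≤ k ∧ ∃ L' : Fin k → Set E3, Borders P L L' by
    obtain ⟨h1, k, hk, h2, h3⟩ := hmain
    have hk' : k = facetEdges P (L 0) + facetEdges P (L 1) + facetEdges P (L 2) +
        facetEdges P (L 3) - 14 := by omega
    subst hk'
    exact ⟨h1, h2, h3⟩
  simp only [hE]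
  rcases hopp with h02 | h13
  · have g := h.mkCfg hb h4 hL h02
    exact ⟨Or.inl (h.first_part g), h.core g hL.1⟩
  · have hL2 : IsSimpleLoop P (fun i => L (nxt i)) :=
      ⟨⟨by norm_num, fun i => hf _, fun _ i => he (nxt i)⟩, hL.2.comp nxt_inj⟩
    have g := h.mkCfg hb h4 hL2 h13
    refine ⟨Or.inr ?_, ?_⟩
    · obtain ⟨h1, v, w, h2, h3, h5, h6, h7, h8, h9⟩ := h.first_part g
      exact ⟨h1, w, v, h2.symm, h5, h3, h7, h6, h9, h8⟩
    · obtain ⟨k, hk, h2, L', γ, C₁, C₂, h3, h5, h6, h7, h8⟩ := h.core g hL2.1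
      have n0 : nxt (0 : Fin 4) = 1 := rfl
      have n1 : nxt (1 : Fin 4) = 2 := rfl
      have n2 : nxt (2 : Fin 4) = 3 := rfl
      have n3 : nxt (3 : Fin 4) = 0 := rfl
      simp only [n0, n1, n2, n3] at hk
      exact ⟨k, by omega, h2, L', γ, C₁, C₂, h3, h5, h6, walks_rot hL.1 h7, h8⟩
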